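/- arXiv:math/0411327 — 2 statements merged into one kernel-verified Lean document; each statement's English description precedes it below -/
import Mathlib

section
/- Let f: N → N' be an isometric immersion with second fundamental form A and shape operator P, satisfying ⟨P(ξ;X),Y⟩_{TN} = ⟨A(X,Y),ξ⟩_{TN'} for X,Y ∈ Γ(TN), ξ ∈ Γ(T^⊥N). Then, by the Gauss equation, the curvature terms along a map φ: M → N with spinor field ψ satisfy R(φ,ψ) = P(𝒜(dφ(e_α), e_α·ψ); ψ) + R'(φ,ψ), where P(𝒜(dφ(e_α),e_α·ψ);ψ) := P(A(∂_{y^l},∂_{y^j});∂_{y^i}) ⟨ψ^i, e_α·ψ^j⟩ φ^l_α, and R, R' are formed from the curvature tensors of N and N' respectively. -/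
noncomputable section

open MeasureTheory Complex Filter
open scoped ENNReal NNReal

/-- The spinor fiber over a two-dimensional flat (spin) domain. -/
abbrev Spinor : Type := ℂ × ℂ

/-- Clifford multiplication of a vector of `ℝ²` on a spinor; it satisfies
`cl v (cl v s) = -‖v‖² • s` and the skew-adjointness relation
`⟨cl v s, t⟩ = -⟨s, cl v t⟩`. -/
def cl (v : ℝ × ℝ) (s : Spinor) : Spinor :=
  v.1 • ((-s.2 : ℂ), s.1) + v.2 • (Complex.I * s.2, Complex.I * s.1)

/-- The (real) inner product `⟨·,·⟩_{ΣM}` on spinors. -/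
def sInner (s t : Spinor) : ℝ :=
  (s.1 * (starRingEnd ℂ) t.1 + s.2 * (starRingEnd ℂ) t.2).re

/-- Partial derivative in the `x`-direction. -/
def pdx {E : Type*} [NormedAddCommGroup E] [NormedSpace ℝ E] (f : ℝ × ℝ → E) (p : ℝ × ℝ) : E :=
  fderiv ℝ f p (1, 0)

/-- Partial derivative in the `y`-direction. -/
def pdy {E : Type*} [NormedAddCommGroup E] [NormedSpace ℝ E] (f : ℝ × ℝ → E) (p : ℝ × ℝ) : E :=
  fderiv ℝ f p (0, 1)

/-- The (flat) Laplacian `Δ = ∂²/∂x² + ∂²/∂y²`. -/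
def lap {E : Type*} [NormedAddCommGroup E] [NormedSpace ℝ E] (f : ℝ × ℝ → E) (p : ℝ × ℝ) : E :=
  pdx (fun q => pdx f q) p + pdy (fun q => pdy f q) p

/-- The gradient of a real valued function on `ℝ²`. -/
def gradc (f : ℝ × ℝ → ℝ) (p : ℝ × ℝ) : ℝ × ℝ := (pdx f p, pdy f p)

/-- The flat Dirac operator `∂̸ = e₁·∇_{e₁} + e₂·∇_{e₂}` on spinors on `ℝ²`. -/
def diracOp (ψ : ℝ × ℝ → Spinor) (p : ℝ × ℝ) : Spinor :=
  cl (1, 0) (pdx ψ p) + cl (0, 1) (pdy ψ p)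

/-- The energy density `|dφ|²` of a map `φ` with values in `ℝ^K`. -/
def eDen {K : ℕ} (φ : ℝ × ℝ → Fin K → ℝ) (p : ℝ × ℝ) : ℝ :=
  ∑ i, ((pdx (fun q => φ q i) p) ^ 2 + (pdy (fun q => φ q i) p) ^ 2)

/-- The pointwise squared norm `|ψ|²` of a spinor field with values in `ΣM ⊗ ℝ^K`. -/
def psiSq {K : ℕ} (ψ : ℝ × ℝ → Fin K → Spinor) (p : ℝ × ℝ) : ℝ :=
  ∑ i, sInner (ψ p i) (ψ p i)

/-- Partial derivative in the `j`-th coordinate direction on a chart of a target manifold. -/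
def pdN {n : ℕ} (h : (Fin n → ℝ) → ℝ) (y : Fin n → ℝ) (j : Fin n) : ℝ :=
  fderiv ℝ h y (Pi.single j 1)

/-- The Christoffel symbols `Γ^i_{jk}` of the Levi-Civita connection of the metric `g`
(with inverse metric `ginv`). -/
def Γchr {n : ℕ} (g ginv : (Fin n → ℝ) → Fin n → Fin n → ℝ)
    (y : Fin n → ℝ) (i j k : Fin n) : ℝ :=
  (1 / 2) * ∑ l, ginv y i l *
    (pdN (fun z => g z l k) y j + pdN (fun z => g z j l) y k - pdN (fun z => g z j k) y l)

/-- The components `R^m_{lij}` of the Riemann curvature tensor of the metric `g`. -/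
def Riem {n : ℕ} (g ginv : (Fin n → ℝ) → Fin n → Fin n → ℝ)
    (y : Fin n → ℝ) (m l i j : Fin n) : ℝ :=
  pdN (fun z => Γchr g ginv z m j l) y i - pdN (fun z => Γchr g ginv z m i l) y j +
    ∑ p, (Γchr g ginv y m i p * Γchr g ginv y p j l -
          Γchr g ginv y m j p * Γchr g ginv y p i l)

/-- `∂f^a/∂y^i`, the differential of a map `f` between charts of `N` and `N'`. -/
def pdmap {n n' : ℕ} (f : (Fin n → ℝ) → Fin n' → ℝ) (y : Fin n → ℝ) (a : Fin n') (i : Fin n) : ℝ :=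
  fderiv ℝ (fun z => f z a) y (Pi.single i 1)

/-- The second fundamental form `A(X,Y) = (∇_X df)(Y)` of a map `f : N → N'`, evaluated on
the coordinate vector fields: `A(∂_{y^i}, ∂_{y^j})^a`. -/
def sff {n n' : ℕ} (Γ : (Fin n → ℝ) → Fin n → Fin n → Fin n → ℝ)
    (Γ' : (Fin n' → ℝ) → Fin n' → Fin n' → Fin n' → ℝ)
    (f : (Fin n → ℝ) → Fin n' → ℝ) (y : Fin n → ℝ) (i j : Fin n) (a : Fin n') : ℝ :=
  pdN (fun z => pdmap f z a j) y i +
    (∑ b, ∑ c, Γ' (f y) a b c * pdmap f y b i * pdmap f y c j) -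
    ∑ k, Γ y k i j * pdmap f y a k

/-- The ambient curvature of `N'` pulled back along the isometric immersion `f` and raised
with the metric of `N`: `R'^m_{lij} = g^{mk} R'_{abcd}(f) f^a_k f^b_l f^c_i f^d_j`. -/
def RiemPull {n n' : ℕ} (g ginv : (Fin n → ℝ) → Fin n → Fin n → ℝ)
    (g' g'inv : (Fin n' → ℝ) → Fin n' → Fin n' → ℝ)
    (f : (Fin n → ℝ) → Fin n' → ℝ) (y : Fin n → ℝ) (m l i j : Fin n) : ℝ :=
  ∑ k, ginv y m k *
    ∑ a, ∑ b, ∑ c, ∑ d,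
      (∑ e, g' (f y) a e * Riem g' g'inv (f y) e b c d) *
        pdmap f y a k * pdmap f y b l * pdmap f y c i * pdmap f y d j

open scoped Matrix

/-!
Write `F_i = df(∂_i)` and let `∇` be the pullback along `f` of the Levi-Civita connection of `g'`.
The Gauss formula `∇_i F_j = A_ij + Γ^k_ij F_k` defines `A`, and metric compatibility and torsion
freeness of both connections show that `A` is symmetric and normal. Differentiating
`⟨A_jl, F_m⟩ = 0` gives `⟨∇_i A_jl, F_m⟩ = -⟨A_jl, A_im⟩`, so applying `∇_i` to the Gauss formula
for `∇_j F_l` and antisymmetrising in `i`, `j` yields the equation of Gauss, in the form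
`R^m_lij = P(A_lj; ∂_i)^m - P(A_li; ∂_j)^m + R'^m_lij`. Since Clifford multiplication is skew,
`⟨ψ^i, ∇φ^l·ψ^j⟩` is antisymmetric in `i`, `j`. Contracted with it, the two `P`-terms agree, which
absorbs the factor `1/2`.
-/

section PartialDerivatives

variable {n : ℕ} {u v : (Fin n → ℝ) → ℝ} {y : Fin n → ℝ} {k m : WithTop ℕ∞}

lemma pdN_add (hu : DifferentiableAt ℝ u y) (hv : DifferentiableAt ℝ v y) (i : Fin n) :
    pdN (fun z => u z + v z) y i = pdN u y i + pdN v y i := by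
  simp [pdN, fderiv_fun_add hu hv]

lemma pdN_mul (hu : DifferentiableAt ℝ u y) (hv : DifferentiableAt ℝ v y) (i : Fin n) :
    pdN (fun z => u z * v z) y i = pdN u y i * v y + u y * pdN v y i := by
  simp only [pdN, fderiv_fun_mul hu hv, add_apply, smul_apply, smul_eq_mul]
  ring

lemma pdN_sum {ι : Type*} {s : Finset ι} {w : ι → (Fin n → ℝ) → ℝ}
    (hw : ∀ k ∈ s, DifferentiableAt ℝ (w k) y) (i : Fin n) :
    pdN (fun z => ∑ k ∈ s, w k z) y i = ∑ k ∈ s, pdN (w k) y i := by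
  simp [pdN, fderiv_fun_sum hw]

lemma pdN_comp {n' : ℕ} {h : (Fin n' → ℝ) → ℝ} {f : (Fin n → ℝ) → Fin n' → ℝ}
    (hh : DifferentiableAt ℝ h (f y)) (hf : DifferentiableAt ℝ f y) (i : Fin n) :
    pdN (fun z => h (f z)) y i = ∑ c, pdN h (f y) c * pdmap f y c i := by
  have hchain : pdN (fun z => h (f z)) y i =
      fderiv ℝ h (f y) (fun c => fderiv ℝ f y (Pi.single i 1) c) :=
    congrArg (· (Pi.single i 1)) (fderiv_comp y hh hf)
  rw [hchain, pi_eq_sum_univ' fun c => fderiv ℝ f y (Pi.single i 1) c, map_sum]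
  refine Finset.sum_congr rfl fun c _ => ?_
  rw [map_smul, smul_eq_mul, mul_comm, pdmap, fderiv_apply hf]
  rfl

lemma contDiff_pdN (hu : ContDiff ℝ m u) (hk : k + 1 ≤ m) (i : Fin n) :
    ContDiff ℝ k fun z => pdN u z i :=
  (hu.fderiv_right hk).clm_apply contDiff_const

lemma pdN_pdN_comm (hu : ContDiff ℝ 2 u) (i j : Fin n) :
    pdN (fun z => pdN u z j) y i = pdN (fun z => pdN u z i) y j := by
  have hd : Differentiable ℝ (fderiv ℝ u) :=
    (hu.fderiv_right (m := 1) one_add_one_eq_two.le).differentiable one_ne_zero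
  have pdN_pdN (i j : Fin n) : pdN (fun z => pdN u z j) y i =
      fderiv ℝ (fderiv ℝ u) y (Pi.single i 1) (Pi.single j 1) := by
    simp only [pdN]
    rw [fderiv_clm_apply (hd y) (by fun_prop)]
    simp
  rw [pdN_pdN, pdN_pdN]
  exact hu.contDiffAt.isSymmSndFDerivAt (by simp) _ _

end PartialDerivatives

section MatrixCalculus

variable {n N K : ℕ}

/-- The partial derivative `∂V/∂yⁱ` of a vector-valued map. For `V = f` a map between charts, it is
the image `df(∂_{yⁱ})` of a coordinate vector field. -/
def vecDeriv (V : (Fin n → ℝ) → Fin N → ℝ) (i : Fin n) (y : Fin n → ℝ) : Fin N → ℝ :=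
  fun a => pdmap V y a i

/-- The entrywise partial derivative `∂M/∂yⁱ` of a matrix-valued map. -/
def matDeriv (M : (Fin n → ℝ) → Matrix (Fin K) (Fin N) ℝ) (i : Fin n) (y : Fin n → ℝ) :
    Matrix (Fin K) (Fin N) ℝ :=
  Matrix.of fun a b => pdN (fun z => M z a b) y i

variable {M : (Fin n → ℝ) → Matrix (Fin K) (Fin N) ℝ} {V W : (Fin n → ℝ) → Fin N → ℝ}
  {y : Fin n → ℝ}

lemma vecDeriv_add (hV : DifferentiableAt ℝ V y) (hW : DifferentiableAt ℝ W y) (i : Fin n) :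
    vecDeriv (fun z => V z + W z) i y = vecDeriv V i y + vecDeriv W i y :=
  funext fun a => pdN_add (differentiableAt_pi.1 hV a) (differentiableAt_pi.1 hW a) i

lemma vecDeriv_smul {r : (Fin n → ℝ) → ℝ} (hr : DifferentiableAt ℝ r y)
    (hV : DifferentiableAt ℝ V y) (i : Fin n) :
    vecDeriv (fun z => r z • V z) i y = pdN r y i • V y + r y • vecDeriv V i y :=
  funext fun a => pdN_mul hr (differentiableAt_pi.1 hV a) i

lemma vecDeriv_sum {ι : Type*} {s : Finset ι} {U : ι → (Fin n → ℝ) → Fin N → ℝ}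
    (hU : ∀ k ∈ s, DifferentiableAt ℝ (U k) y) (i : Fin n) :
    vecDeriv (fun z => ∑ k ∈ s, U k z) i y = ∑ k ∈ s, vecDeriv (U k) i y := by
  funext a
  simp only [vecDeriv, pdmap, Finset.sum_apply]
  exact pdN_sum (fun k hk => differentiableAt_pi.1 (hU k hk) a) i

lemma contDiff_vecDeriv {k m : WithTop ℕ∞} (hV : ContDiff ℝ m V) (hk : k + 1 ≤ m) (i : Fin n) :
    ContDiff ℝ k (vecDeriv V i) :=
  contDiff_pi.2 fun a => contDiff_pdN (contDiff_pi.1 hV a) hk i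

lemma vecDeriv_vecDeriv_comm (hV : ContDiff ℝ 2 V) (i j : Fin n) :
    vecDeriv (vecDeriv V j) i y = vecDeriv (vecDeriv V i) j y :=
  funext fun a => pdN_pdN_comm (contDiff_pi.1 hV a) i j

lemma vecDeriv_mulVec (hM : ∀ a b, DifferentiableAt ℝ (fun z => M z a b) y)
    (hV : DifferentiableAt ℝ V y) (i : Fin n) :
    vecDeriv (fun z => M z *ᵥ V z) i y = matDeriv M i y *ᵥ V y + M y *ᵥ vecDeriv V i y := by
  have hV' := differentiableAt_pi.1 hV
  funext a
  simp only [Matrix.mulVec, dotProduct, Pi.add_apply, ← Finset.sum_add_distrib]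
  change pdN (fun z => ∑ b, M z a b * V z b) y i = _
  rw [pdN_sum fun b _ => (hM a b).fun_mul (hV' b)]
  exact Finset.sum_congr rfl fun b _ => pdN_mul (hM a b) (hV' b) i

lemma pdN_dotProduct (hV : DifferentiableAt ℝ V y) (hW : DifferentiableAt ℝ W y) (i : Fin n) :
    pdN (fun z => V z ⬝ᵥ W z) y i = vecDeriv V i y ⬝ᵥ W y + V y ⬝ᵥ vecDeriv W i y := by
  have hV' := differentiableAt_pi.1 hV
  have hW' := differentiableAt_pi.1 hW
  simp only [dotProduct, ← Finset.sum_add_distrib]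
  rw [pdN_sum fun a _ => (hV' a).fun_mul (hW' a)]
  exact Finset.sum_congr rfl fun a _ => pdN_mul (hV' a) (hW' a) i

lemma differentiableAt_mulVec (hM : ∀ a b, DifferentiableAt ℝ (fun z => M z a b) y)
    (hV : DifferentiableAt ℝ V y) : DifferentiableAt ℝ (fun z => M z *ᵥ V z) y := by
  refine differentiableAt_pi.2 fun a => ?_
  simp only [Matrix.mulVec, dotProduct]
  exact DifferentiableAt.fun_sum fun b _ => (hM a b).fun_mul (differentiableAt_pi.1 hV b)

lemma pdN_toBilin' {M : (Fin n → ℝ) → Matrix (Fin N) (Fin N) ℝ}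
    (hM : ∀ a b, DifferentiableAt ℝ (fun z => M z a b) y)
    (hV : DifferentiableAt ℝ V y) (hW : DifferentiableAt ℝ W y) (i : Fin n) :
    pdN (fun z => (M z).toBilin' (V z) (W z)) y i =
      (M y).toBilin' (vecDeriv V i y) (W y) + (matDeriv M i y).toBilin' (V y) (W y) +
        (M y).toBilin' (V y) (vecDeriv W i y) := by
  simp only [Matrix.toBilin'_apply']
  rw [pdN_dotProduct hV (differentiableAt_mulVec hM hW), vecDeriv_mulVec hM hW, dotProduct_add,
    add_assoc]

end MatrixCalculus

section MatrixInverse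

variable {𝕜 E ι : Type*} [NontriviallyNormedField 𝕜] [NormedAddCommGroup E] [NormedSpace 𝕜 E]
  [Fintype ι] [DecidableEq ι] {k : WithTop ℕ∞} {M : E → Matrix ι ι 𝕜}

lemma contDiff_matrix_det (hM : ∀ a b, ContDiff 𝕜 k fun x => M x a b) :
    ContDiff 𝕜 k fun x => (M x).det := by
  simp only [Matrix.det_apply']
  exact ContDiff.sum fun σ _ => contDiff_const.mul (contDiff_prod fun a _ => hM _ _)

lemma contDiff_matrix_adjugate (hM : ∀ a b, ContDiff 𝕜 k fun x => M x a b) (i j : ι) :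
    ContDiff 𝕜 k fun x => (M x).adjugate i j := by
  simp only [Matrix.adjugate_apply]
  refine contDiff_matrix_det fun a b => ?_
  obtain rfl | ha := eq_or_ne a j
  · simpa only [Matrix.updateRow_self] using contDiff_const
  · simpa only [Matrix.updateRow_ne ha] using hM a b

lemma contDiff_matrix_inv (hM : ∀ a b, ContDiff 𝕜 k fun x => M x a b)
    (hdet : ∀ x, (M x).det ≠ 0) (i j : ι) : ContDiff 𝕜 k fun x => (M x)⁻¹ i j := by
  simp only [Matrix.inv_def, Matrix.smul_apply, Ring.inverse_eq_inv', smul_eq_mul]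
  exact ((contDiff_matrix_det hM).inv hdet).mul (contDiff_matrix_adjugate hM i j)

end MatrixInverse

/-- `g` gives the coefficients of a `C²` pseudo-Riemannian metric in a chart, and `ginv` those of
the inverse metric. -/
structure IsPseudoRiemannianMetric {n : ℕ} (g ginv : (Fin n → ℝ) → Fin n → Fin n → ℝ) : Prop where
  contDiff : ContDiff ℝ 2 g
  symm : ∀ y i j, g y i j = g y j i
  inv_mul : ∀ y i j, ∑ k, ginv y i k * g y k j = if i = j then 1 else 0

/-- The inner product `⟨·,·⟩` on the tangent space at `y` of the metric with coefficients `g`. -/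
def metricForm {n : ℕ} (g : (Fin n → ℝ) → Fin n → Fin n → ℝ) (y : Fin n → ℝ) :
    LinearMap.BilinForm ℝ (Fin n → ℝ) :=
  (Matrix.of (g y)).toBilin'

lemma metricForm_apply {n : ℕ} (g : (Fin n → ℝ) → Fin n → Fin n → ℝ) (y u v : Fin n → ℝ) :
    metricForm g y u v = ∑ a, ∑ b, g y a b * u a * v b := by
  simp [metricForm, Matrix.toBilin'_apply, mul_comm (u _)]

lemma metricForm_single_left {n : ℕ} (g : (Fin n → ℝ) → Fin n → Fin n → ℝ) (y v : Fin n → ℝ)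
    (m : Fin n) : metricForm g y (Pi.single m 1) v = ∑ k, g y m k * v k := by
  rw [metricForm, Matrix.toBilin'_apply', single_one_dotProduct]
  rfl

namespace IsPseudoRiemannianMetric

variable {n : ℕ} {g ginv : (Fin n → ℝ) → Fin n → Fin n → ℝ}

lemma contDiff_apply (hg : IsPseudoRiemannianMetric g ginv) (i j : Fin n) :
    ContDiff ℝ 2 fun y => g y i j :=
  contDiff_pi.1 (contDiff_pi.1 hg.contDiff i) j

lemma differentiable_apply (hg : IsPseudoRiemannianMetric g ginv) (i j : Fin n) :
    Differentiable ℝ fun y => g y i j :=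
  (hg.contDiff_apply i j).differentiable two_ne_zero

lemma metricForm_comm (hg : IsPseudoRiemannianMetric g ginv) (y u v : Fin n → ℝ) :
    metricForm g y u v = metricForm g y v u := by
  simp only [metricForm_apply]
  rw [Finset.sum_comm]
  refine Finset.sum_congr rfl fun a _ => Finset.sum_congr rfl fun b _ => ?_
  rw [hg.symm y b a, mul_right_comm]

lemma of_inv_mul_of (hg : IsPseudoRiemannianMetric g ginv) (y : Fin n → ℝ) :
    Matrix.of (ginv y) * Matrix.of (g y) = 1 := by
  ext i j
  simp only [Matrix.mul_apply, Matrix.of_apply, hg.inv_mul, Matrix.one_apply]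

lemma of_mulVec_of_inv_mulVec (hg : IsPseudoRiemannianMetric g ginv) (y u : Fin n → ℝ) :
    Matrix.of (g y) *ᵥ (Matrix.of (ginv y) *ᵥ u) = u := by
  rw [Matrix.mulVec_mulVec, mul_eq_one_comm.1 (hg.of_inv_mul_of y), Matrix.one_mulVec]

lemma eq_of_metricForm_eq (hg : IsPseudoRiemannianMetric g ginv) {y u v : Fin n → ℝ}
    (h : ∀ m, metricForm g y (Pi.single m 1) u = metricForm g y (Pi.single m 1) v) : u = v := by
  have h_mulVec : Matrix.of (g y) *ᵥ u = Matrix.of (g y) *ᵥ v :=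
    by
    funext m
    simp only [metricForm_single_left] at h
    exact h m
  have := congrArg (Matrix.of (ginv y) *ᵥ ·) h_mulVec
  simpa only [Matrix.mulVec_mulVec, hg.of_inv_mul_of, Matrix.one_mulVec] using this

lemma contDiff_inv_apply (hg : IsPseudoRiemannianMetric g ginv) (i j : Fin n) :
    ContDiff ℝ 2 fun y => ginv y i j := by
  have ginv_eq (y) : ginv y i j = (Matrix.of (g y))⁻¹ i j :=
    congrFun₂ (Matrix.inv_eq_left_inv (hg.of_inv_mul_of y)).symm i j
  have det_ne_zero (y) : (Matrix.of (g y)).det ≠ 0 :=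
    Matrix.det_ne_zero_of_left_inverse (hg.of_inv_mul_of y)
  rw [funext ginv_eq]
  exact contDiff_matrix_inv hg.contDiff_apply det_ne_zero i j

lemma contDiff_Γchr (hg : IsPseudoRiemannianMetric g ginv) :
    ContDiff ℝ 1 (Γchr g ginv) := by
  refine contDiff_pi.2 fun i => contDiff_pi.2 fun j => contDiff_pi.2 fun k => ?_
  have hpdN (a b c) : ContDiff ℝ 1 fun y => pdN (fun z => g z a b) y c :=
    contDiff_pdN (hg.contDiff_apply a b) one_add_one_eq_two.le c
  exact contDiff_const.mul <| ContDiff.sum fun l _ =>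
    ((hg.contDiff_inv_apply i l).of_le one_le_two).mul
      (((hpdN l k j).add (hpdN j l k)).sub (hpdN j k l))

lemma differentiable_Γchr_apply (hg : IsPseudoRiemannianMetric g ginv) (i j k : Fin n) :
    Differentiable ℝ fun y => Γchr g ginv y i j k :=
  (contDiff_pi.1 (contDiff_pi.1 (contDiff_pi.1 hg.contDiff_Γchr i) j) k).differentiable one_ne_zero

lemma Γchr_comm (hg : IsPseudoRiemannianMetric g ginv) (y : Fin n → ℝ) (i j k : Fin n) :
    Γchr g ginv y i j k = Γchr g ginv y i k j := by
  unfold Γchr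
  congr! 3 with l
  simp only [hg.symm _ l, hg.symm _ j k]
  ring

lemma sum_metric_mul_Γchr (hg : IsPseudoRiemannianMetric g ginv) (y : Fin n → ℝ)
    (m j k : Fin n) :
    ∑ i, g y m i * Γchr g ginv y i j k = (1 / 2) *
      (pdN (fun z => g z m k) y j + pdN (fun z => g z j m) y k - pdN (fun z => g z j k) y m) := by
  set w : Fin n → ℝ := fun l => (1 / 2) *
    (pdN (fun z => g z l k) y j + pdN (fun z => g z j l) y k - pdN (fun z => g z j k) y l)
  have hΓ : (fun i => Γchr g ginv y i j k) = Matrix.of (ginv y) *ᵥ w := by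
    funext i
    simp only [Γchr, Matrix.mulVec, dotProduct, Matrix.of_apply, Finset.mul_sum, w]
    exact Finset.sum_congr rfl fun l _ => mul_left_comm _ _ _
  have h : Matrix.of (g y) *ᵥ (fun i => Γchr g ginv y i j k) = w := by
    rw [hΓ, hg.of_mulVec_of_inv_mulVec]
  exact congrFun h m

lemma pdN_metric (hg : IsPseudoRiemannianMetric g ginv) (y : Fin n → ℝ) (a b c : Fin n) :
    pdN (fun z => g z a b) y c =
      ∑ e, g y b e * Γchr g ginv y e c a + ∑ e, g y a e * Γchr g ginv y e c b := by
  rw [hg.sum_metric_mul_Γchr, hg.sum_metric_mul_Γchr]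
  simp only [hg.symm _ b a, hg.symm _ c a, hg.symm _ c b]
  ring

end IsPseudoRiemannianMetric

section CovariantDerivative

variable {n n' : ℕ} {Γ' : (Fin n' → ℝ) → Fin n' → Fin n' → Fin n' → ℝ}
  {f V W : (Fin n → ℝ) → Fin n' → ℝ} {y : Fin n → ℝ} {k m : WithTop ℕ∞}

/-- The connection matrix `Ω_i`, with entries `Γ'^a_{bc}(f) ∂_i f^b`, of the pullback along `f` of
the connection with Christoffel symbols `Γ'`. -/
def connAlong (Γ' : (Fin n' → ℝ) → Fin n' → Fin n' → Fin n' → ℝ) (f : (Fin n → ℝ) → Fin n' → ℝ)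
    (i : Fin n) (y : Fin n → ℝ) : Matrix (Fin n') (Fin n') ℝ :=
  Matrix.of fun a c => ∑ b, Γ' (f y) a b c * vecDeriv f i y b

/-- The covariant derivative `∇_{∂_i} V` of a vector field `V` along `f`. -/
def covDeriv (Γ' : (Fin n' → ℝ) → Fin n' → Fin n' → Fin n' → ℝ) (f : (Fin n → ℝ) → Fin n' → ℝ)
    (i : Fin n) (V : (Fin n → ℝ) → Fin n' → ℝ) (y : Fin n → ℝ) : Fin n' → ℝ :=
  vecDeriv V i y + connAlong Γ' f i y *ᵥ V y

lemma contDiff_connAlong (hΓ : ContDiff ℝ k Γ') (hf : ContDiff ℝ m f) (hk : k + 1 ≤ m)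
    (i : Fin n) (a c : Fin n') : ContDiff ℝ k fun y => connAlong Γ' f i y a c := by
  have hΓf : ContDiff ℝ k fun y => Γ' (f y) := hΓ.comp (hf.of_le (le_self_add.trans hk))
  have hΓf_apply (b) := contDiff_pi.1 (contDiff_pi.1 (contDiff_pi.1 hΓf a) b) c
  simp only [connAlong, Matrix.of_apply]
  exact ContDiff.sum fun b _ =>
    (hΓf_apply b).mul (contDiff_pi.1 (contDiff_vecDeriv hf hk i) b)

lemma contDiff_covDeriv (hΓ : ContDiff ℝ k Γ') (hf : ContDiff ℝ m f) (hV : ContDiff ℝ m V)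
    (hk : k + 1 ≤ m) (i : Fin n) : ContDiff ℝ k (covDeriv Γ' f i V) := by
  have hV_apply := contDiff_pi.1 (hV.of_le (le_self_add.trans hk))
  refine (contDiff_vecDeriv hV hk i).add (contDiff_pi.2 fun a => ?_)
  simp only [Matrix.mulVec, dotProduct]
  exact ContDiff.sum fun c _ => (contDiff_connAlong hΓ hf hk i a c).mul (hV_apply c)

lemma covDeriv_add (hV : DifferentiableAt ℝ V y) (hW : DifferentiableAt ℝ W y) (i : Fin n) :
    covDeriv Γ' f i (fun z => V z + W z) y = covDeriv Γ' f i V y + covDeriv Γ' f i W y := by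
  rw [covDeriv, vecDeriv_add hV hW, Matrix.mulVec_add, add_add_add_comm]
  rfl

lemma covDeriv_smul {r : (Fin n → ℝ) → ℝ} (hr : DifferentiableAt ℝ r y)
    (hV : DifferentiableAt ℝ V y) (i : Fin n) :
    covDeriv Γ' f i (fun z => r z • V z) y = pdN r y i • V y + r y • covDeriv Γ' f i V y := by
  rw [covDeriv, vecDeriv_smul hr hV, Matrix.mulVec_smul, add_assoc, ← smul_add]
  rfl

lemma covDeriv_sum {ι : Type*} {s : Finset ι} {U : ι → (Fin n → ℝ) → Fin n' → ℝ}
    (hU : ∀ k ∈ s, DifferentiableAt ℝ (U k) y) (i : Fin n) :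
    covDeriv Γ' f i (fun z => ∑ k ∈ s, U k z) y = ∑ k ∈ s, covDeriv Γ' f i (U k) y := by
  simp only [covDeriv, vecDeriv_sum hU, Matrix.mulVec_sum, Finset.sum_add_distrib]

lemma covDeriv_vecDeriv_comm (hΓ : ∀ z a b c, Γ' z a b c = Γ' z a c b) (hf : ContDiff ℝ 2 f)
    (i j : Fin n) : covDeriv Γ' f i (vecDeriv f j) y = covDeriv Γ' f j (vecDeriv f i) y := by
  have hconn : connAlong Γ' f i y *ᵥ vecDeriv f j y = connAlong Γ' f j y *ᵥ vecDeriv f i y := by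
    funext a
    simp only [connAlong, Matrix.mulVec, dotProduct, Matrix.of_apply, Finset.sum_mul]
    rw [Finset.sum_comm]
    refine Finset.sum_congr rfl fun b _ => Finset.sum_congr rfl fun c _ => ?_
    rw [hΓ, mul_right_comm]
  rw [covDeriv, covDeriv, vecDeriv_vecDeriv_comm hf, hconn]

lemma covDeriv_covDeriv_sub (hΓ : ContDiff ℝ 1 Γ') (hf : ContDiff ℝ 2 f) (hV : ContDiff ℝ 2 V)
    (i j : Fin n) :
    covDeriv Γ' f i (covDeriv Γ' f j V) y - covDeriv Γ' f j (covDeriv Γ' f i V) y =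
      (matDeriv (connAlong Γ' f j) i y - matDeriv (connAlong Γ' f i) j y +
        (connAlong Γ' f i y * connAlong Γ' f j y - connAlong Γ' f j y * connAlong Γ' f i y)) *ᵥ
          V y := by
  have hV' : DifferentiableAt ℝ V y := hV.differentiable two_ne_zero y
  have hdV (j) : DifferentiableAt ℝ (vecDeriv V j) y :=
    (contDiff_vecDeriv hV one_add_one_eq_two.le j).differentiable one_ne_zero y
  have hΩ (j a c) : DifferentiableAt ℝ (fun z => connAlong Γ' f j z a c) y :=
    (contDiff_connAlong hΓ hf one_add_one_eq_two.le j a c).differentiable one_ne_zero y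
  have hDD (i j : Fin n) : covDeriv Γ' f i (covDeriv Γ' f j V) y =
      vecDeriv (vecDeriv V j) i y + (matDeriv (connAlong Γ' f j) i y *ᵥ V y +
        connAlong Γ' f j y *ᵥ vecDeriv V i y) + (connAlong Γ' f i y *ᵥ vecDeriv V j y +
        (connAlong Γ' f i y * connAlong Γ' f j y) *ᵥ V y) := by
    rw [← Matrix.mulVec_mulVec, ← Matrix.mulVec_add, ← vecDeriv_mulVec (hΩ j) hV',
      ← vecDeriv_add (hdV j) (differentiableAt_mulVec (hΩ j) hV')]
    rfl
  rw [hDD, hDD, vecDeriv_vecDeriv_comm hV j i]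
  simp only [Matrix.add_mulVec, Matrix.sub_mulVec]
  abel

end CovariantDerivative

section LeviCivita

variable {n n' : ℕ} {g' g'inv : (Fin n' → ℝ) → Fin n' → Fin n' → ℝ}
  {f V W : (Fin n → ℝ) → Fin n' → ℝ} {y : Fin n → ℝ}

lemma matDeriv_metric_comp (hg' : IsPseudoRiemannianMetric g' g'inv)
    (hf : DifferentiableAt ℝ f y) (i : Fin n) :
    matDeriv (fun z => Matrix.of (g' (f z))) i y =
      (connAlong (Γchr g' g'inv) f i y)ᵀ * Matrix.of (g' (f y)) +
        Matrix.of (g' (f y)) * connAlong (Γchr g' g'inv) f i y := by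
  ext a b
  have hchain : matDeriv (fun z => Matrix.of (g' (f z))) i y a b =
      ∑ c, pdN (fun z => g' z a b) (f y) c * vecDeriv f i y c :=
    pdN_comp (hg'.differentiable_apply a b (f y)) hf i
  simp only [hchain, hg'.pdN_metric, add_mul, Finset.sum_add_distrib, Matrix.add_apply,
    Matrix.mul_apply, Matrix.transpose_apply, connAlong, Matrix.of_apply, Finset.mul_sum,
    Finset.sum_mul]
  congr 1 <;> rw [Finset.sum_comm] <;>
    refine Finset.sum_congr rfl fun e _ => Finset.sum_congr rfl fun c _ => ?_
  · rw [hg'.symm _ b e]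
    ring
  · ring

lemma pdN_metricForm_comp (hg' : IsPseudoRiemannianMetric g' g'inv) (hf : DifferentiableAt ℝ f y)
    (hV : DifferentiableAt ℝ V y) (hW : DifferentiableAt ℝ W y) (i : Fin n) :
    pdN (fun z => metricForm g' (f z) (V z) (W z)) y i =
      metricForm g' (f y) (covDeriv (Γchr g' g'inv) f i V y) (W y) +
        metricForm g' (f y) (V y) (covDeriv (Γchr g' g'inv) f i W y) := by
  have hg'f (a b) : DifferentiableAt ℝ (fun z => Matrix.of (g' (f z)) a b) y :=
    (hg'.differentiable_apply a b (f y)).comp y hf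
  simp only [metricForm, covDeriv, map_add, LinearMap.add_apply]
  rw [pdN_toBilin' hg'f hV hW, matDeriv_metric_comp hg' hf]
  simp only [Matrix.toBilin'_apply', Matrix.add_mulVec, dotProduct_add, ← Matrix.mulVec_mulVec,
    Matrix.dotProduct_transpose_mulVec]
  rw [dotProduct_comm (_ *ᵥ W y)]
  ring

lemma matDeriv_connAlong_apply (hg' : IsPseudoRiemannianMetric g' g'inv) (hf : ContDiff ℝ 2 f)
    (i j : Fin n) (a b : Fin n') :
    matDeriv (connAlong (Γchr g' g'inv) f j) i y a b =
      ∑ c, ∑ d, pdN (fun z => Γchr g' g'inv z a d b) (f y) c * vecDeriv f i y c * vecDeriv f j y d +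
        ∑ d, Γchr g' g'inv (f y) a d b * vecDeriv (vecDeriv f j) i y d := by
  have hf' : DifferentiableAt ℝ f y := hf.differentiable two_ne_zero y
  have hdf (d) : DifferentiableAt ℝ (fun z => vecDeriv f j z d) y :=
    (contDiff_pi.1 (contDiff_vecDeriv hf one_add_one_eq_two.le j) d).differentiable one_ne_zero y
  have hΓ (d) := hg'.differentiable_Γchr_apply a d b (f y)
  have hΓf (d) : DifferentiableAt ℝ (fun z => Γchr g' g'inv (f z) a d b) y := (hΓ d).comp y hf'
  change pdN (fun z => ∑ d, Γchr g' g'inv (f z) a d b * vecDeriv f j z d) y i = _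
  rw [pdN_sum fun d _ => (hΓf d).fun_mul (hdf d), Finset.sum_comm,
    ← Finset.sum_add_distrib]
  refine Finset.sum_congr rfl fun d _ => ?_
  rw [pdN_mul (hΓf d) (hdf d), ← Finset.sum_mul]
  exact congrArg (· * _ + _) (pdN_comp (hΓ d) hf' i)

lemma connAlong_mul_connAlong_apply {Γ' : (Fin n' → ℝ) → Fin n' → Fin n' → Fin n' → ℝ}
    (i j : Fin n) (a b : Fin n') :
    (connAlong Γ' f i y * connAlong Γ' f j y) a b =
      ∑ c, ∑ d, (∑ p, Γ' (f y) a c p * Γ' (f y) p d b) * vecDeriv f i y c * vecDeriv f j y d := by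
  simp only [Matrix.mul_apply, connAlong, Matrix.of_apply, Finset.sum_mul]
  rw [Finset.sum_comm]
  refine Finset.sum_congr rfl fun c _ => ?_
  simp only [Finset.mul_sum]
  rw [Finset.sum_comm]
  refine Finset.sum_congr rfl fun d _ => Finset.sum_congr rfl fun p _ => ?_
  ring

lemma curvature_connAlong_apply (hg' : IsPseudoRiemannianMetric g' g'inv) (hf : ContDiff ℝ 2 f)
    (i j : Fin n) (a b : Fin n') :
    (matDeriv (connAlong (Γchr g' g'inv) f j) i y - matDeriv (connAlong (Γchr g' g'inv) f i) j y +
        (connAlong (Γchr g' g'inv) f i y * connAlong (Γchr g' g'inv) f j y -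
          connAlong (Γchr g' g'inv) f j y * connAlong (Γchr g' g'inv) f i y)) a b =
      ∑ c, ∑ d, Riem g' g'inv (f y) a b c d * vecDeriv f i y c * vecDeriv f j y d := by
  have hswap (U : Fin n' → Fin n' → ℝ) :
      ∑ c, ∑ d, U c d * vecDeriv f j y c * vecDeriv f i y d =
        ∑ c, ∑ d, U d c * vecDeriv f i y c * vecDeriv f j y d := by
    rw [Finset.sum_comm]
    exact Finset.sum_congr rfl fun c _ => Finset.sum_congr rfl fun d _ => mul_right_comm _ _ _
  simp only [Matrix.add_apply, Matrix.sub_apply, matDeriv_connAlong_apply hg' hf,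
    connAlong_mul_connAlong_apply, vecDeriv_vecDeriv_comm hf j i]
  rw [add_sub_add_right_eq_sub, hswap fun c d => pdN (fun z => Γchr g' g'inv z a d b) (f y) c,
    hswap fun c d => ∑ p, Γchr g' g'inv (f y) a c p * Γchr g' g'inv (f y) p d b]
  simp only [← Finset.sum_sub_distrib, ← Finset.sum_add_distrib, ← sub_mul, ← add_mul]
  rfl

end LeviCivita

section GaussEquation

variable {n n' : ℕ} {g ginv : (Fin n → ℝ) → Fin n → Fin n → ℝ}
  {g' g'inv : (Fin n' → ℝ) → Fin n' → Fin n' → ℝ} {f : (Fin n → ℝ) → Fin n' → ℝ} {y : Fin n → ℝ}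

/-- The map `f` between charts is isometric: it pulls the metric `g'` back to `g`. -/
def IsIsometric (g : (Fin n → ℝ) → Fin n → Fin n → ℝ) (g' : (Fin n' → ℝ) → Fin n' → Fin n' → ℝ)
    (f : (Fin n → ℝ) → Fin n' → ℝ) : Prop :=
  ∀ y i j, metricForm g' (f y) (vecDeriv f i y) (vecDeriv f j y) = g y i j

/-- `P` is the shape operator `P(ξ; X)` of `f` at `y`: `⟨P(ξ; X), Y⟩ = ⟨A(X, Y), ξ⟩` for all tangent
`X`, `Y` and all normal `ξ`. Nothing is required of `P` at vectors `ξ` that are not normal. -/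
def IsShapeOperatorAt (g ginv : (Fin n → ℝ) → Fin n → Fin n → ℝ)
    (g' g'inv : (Fin n' → ℝ) → Fin n' → Fin n' → ℝ) (f : (Fin n → ℝ) → Fin n' → ℝ)
    (y : Fin n → ℝ) (P : (Fin n' → ℝ) → (Fin n → ℝ) → Fin n → ℝ) : Prop :=
  ∀ ξ, (∀ Z : Fin n → ℝ, metricForm g' (f y) ξ (∑ i, Z i • vecDeriv f i y) = 0) →
    ∀ X Y, metricForm g y (P ξ X) Y = metricForm g' (f y)
      (∑ i, ∑ j, (X i * Y j) • sff (Γchr g ginv) (Γchr g' g'inv) f y i j) ξ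

lemma covDeriv_vecDeriv_eq_sff_add (Γ : (Fin n → ℝ) → Fin n → Fin n → Fin n → ℝ)
    (Γ' : (Fin n' → ℝ) → Fin n' → Fin n' → Fin n' → ℝ) (i j : Fin n) :
    covDeriv Γ' f i (vecDeriv f j) y = sff Γ Γ' f y i j + ∑ k, Γ y k i j • vecDeriv f k y := by
  funext a
  simp only [covDeriv, sff, connAlong, vecDeriv, Matrix.mulVec, dotProduct, Matrix.of_apply,
    Pi.add_apply, Finset.sum_apply, Pi.smul_apply, smul_eq_mul, Finset.sum_mul, sub_add_cancel]
  rw [Finset.sum_comm]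
  rfl

lemma sff_comm (hg : IsPseudoRiemannianMetric g ginv) (hg' : IsPseudoRiemannianMetric g' g'inv)
    (hf : ContDiff ℝ 2 f) (i j : Fin n) :
    sff (Γchr g ginv) (Γchr g' g'inv) f y i j = sff (Γchr g ginv) (Γchr g' g'inv) f y j i := by
  have h := covDeriv_vecDeriv_comm (y := y) hg'.Γchr_comm hf i j
  simp only [covDeriv_vecDeriv_eq_sff_add (Γchr g ginv), hg.Γchr_comm y _ i j] at h
  exact add_right_cancel h

lemma differentiableAt_sff (hg : IsPseudoRiemannianMetric g ginv)
    (hg' : IsPseudoRiemannianMetric g' g'inv) (hf : ContDiff ℝ 3 f) (i j : Fin n) :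
    DifferentiableAt ℝ (fun z => sff (Γchr g ginv) (Γchr g' g'inv) f z i j) y := by
  have hdf (k : Fin n) : ContDiff ℝ 2 (vecDeriv f k) :=
    contDiff_vecDeriv hf two_add_one_eq_three.le k
  have hcov : DifferentiableAt ℝ (covDeriv (Γchr g' g'inv) f i (vecDeriv f j)) y :=
    (contDiff_covDeriv hg'.contDiff_Γchr (hf.of_le (by norm_num)) (hdf j)
      one_add_one_eq_two.le i).differentiable one_ne_zero y
  have hsff (z) : sff (Γchr g ginv) (Γchr g' g'inv) f z i j =
      covDeriv (Γchr g' g'inv) f i (vecDeriv f j) z - ∑ k, Γchr g ginv z k i j • vecDeriv f k z :=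
    eq_sub_of_add_eq (covDeriv_vecDeriv_eq_sff_add _ _ i j).symm
  simp only [hsff]
  exact hcov.sub (.fun_sum fun k _ =>
    (hg.differentiable_Γchr_apply k i j y).smul ((hdf k).differentiable two_ne_zero y))

lemma metricForm_covDeriv_vecDeriv (hg : IsPseudoRiemannianMetric g ginv)
    (hg' : IsPseudoRiemannianMetric g' g'inv) (hf : ContDiff ℝ 2 f) (hiso : IsIsometric g g' f)
    (i j k : Fin n) :
    metricForm g' (f y) (covDeriv (Γchr g' g'inv) f i (vecDeriv f j) y) (vecDeriv f k y) =
      ∑ l, g y k l * Γchr g ginv y l i j := by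
  set D : Fin n → Fin n → Fin n → ℝ := fun i j k =>
    metricForm g' (f y) (covDeriv (Γchr g' g'inv) f i (vecDeriv f j) y) (vecDeriv f k y) with hD
  have hdf (k : Fin n) : DifferentiableAt ℝ (vecDeriv f k) y :=
    (contDiff_vecDeriv hf one_add_one_eq_two.le k).differentiable one_ne_zero y
  have hcompat (i j k : Fin n) : pdN (fun z => g z j k) y i = D i j k + D i k j := by
    simp only [← hiso _ j k]
    rw [pdN_metricForm_comp hg' (hf.differentiable two_ne_zero y) (hdf j) (hdf k),
      hg'.metricForm_comm _ (vecDeriv f j y)]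
  have hD_comm (i j k : Fin n) : D i j k = D j i k := by
    simp only [hD, covDeriv_vecDeriv_comm hg'.Γchr_comm hf i j]
  change D i j k = _
  rw [hg.sum_metric_mul_Γchr, hcompat, hcompat, hcompat, hD_comm k i j, hD_comm k j i,
    hD_comm j i k]
  ring

lemma metricForm_sff_vecDeriv (hg : IsPseudoRiemannianMetric g ginv)
    (hg' : IsPseudoRiemannianMetric g' g'inv) (hf : ContDiff ℝ 2 f) (hiso : IsIsometric g g' f)
    (i j k : Fin n) :
    metricForm g' (f y) (sff (Γchr g ginv) (Γchr g' g'inv) f y i j) (vecDeriv f k y) = 0 := by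
  rw [eq_sub_of_add_eq (covDeriv_vecDeriv_eq_sff_add _ _ i j).symm, map_sub,
    LinearMap.sub_apply, metricForm_covDeriv_vecDeriv hg hg' hf hiso, sub_eq_zero]
  simp only [map_sum, map_smul, LinearMap.sum_apply, LinearMap.smul_apply, smul_eq_mul, hiso y _ k,
    hg.symm y k, mul_comm]

lemma metricForm_covDeriv_sff (hg : IsPseudoRiemannianMetric g ginv)
    (hg' : IsPseudoRiemannianMetric g' g'inv) (hf : ContDiff ℝ 3 f) (hiso : IsIsometric g g' f)
    (i j l m : Fin n) :
    metricForm g' (f y)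
        (covDeriv (Γchr g' g'inv) f i (fun z => sff (Γchr g ginv) (Γchr g' g'inv) f z j l) y)
        (vecDeriv f m y) =
      -metricForm g' (f y) (sff (Γchr g ginv) (Γchr g' g'inv) f y j l)
        (sff (Γchr g ginv) (Γchr g' g'inv) f y i m) := by
  have hf2 : ContDiff ℝ 2 f := hf.of_le (by norm_num)
  have hdf : DifferentiableAt ℝ (vecDeriv f m) y :=
    (contDiff_vecDeriv hf2 one_add_one_eq_two.le m).differentiable one_ne_zero y
  have hcompat := pdN_metricForm_comp hg' (hf2.differentiable two_ne_zero y)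
    (differentiableAt_sff hg hg' hf j l) hdf i
  have hderiv : pdN (fun z => metricForm g' (f z)
      (sff (Γchr g ginv) (Γchr g' g'inv) f z j l) (vecDeriv f m z)) y i = 0 := by
    simp [metricForm_sff_vecDeriv hg hg' hf2 hiso, pdN]
  rw [hderiv, covDeriv_vecDeriv_eq_sff_add (Γchr g ginv)] at hcompat
  simp only [map_add, map_sum, map_smul, metricForm_sff_vecDeriv hg hg' hf2 hiso, smul_zero,
    Finset.sum_const_zero, add_zero] at hcompat
  exact eq_neg_of_add_eq_zero_left hcompat.symm

lemma metricForm_covDeriv_covDeriv_vecDeriv (hg : IsPseudoRiemannianMetric g ginv)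
    (hg' : IsPseudoRiemannianMetric g' g'inv) (hf : ContDiff ℝ 3 f) (hiso : IsIsometric g g' f)
    (i j l m : Fin n) :
    metricForm g' (f y)
        (covDeriv (Γchr g' g'inv) f i (covDeriv (Γchr g' g'inv) f j (vecDeriv f l)) y)
        (vecDeriv f m y) =
      ∑ k, g y m k * (pdN (fun z => Γchr g ginv z k j l) y i +
          ∑ p, Γchr g ginv y k i p * Γchr g ginv y p j l) -
        metricForm g' (f y) (sff (Γchr g ginv) (Γchr g' g'inv) f y j l)
          (sff (Γchr g ginv) (Γchr g' g'inv) f y i m) := by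
  have hf2 : ContDiff ℝ 2 f := hf.of_le (by norm_num)
  have hdf (k : Fin n) : DifferentiableAt ℝ (vecDeriv f k) y :=
    (contDiff_vecDeriv hf2 one_add_one_eq_two.le k).differentiable one_ne_zero y
  have hΓ (k : Fin n) := hg.differentiable_Γchr_apply k j l y
  have hΓdf (k : Fin n) : DifferentiableAt ℝ (fun z => Γchr g ginv z k j l • vecDeriv f k z) y :=
    (hΓ k).smul (hdf k)
  have hgauss : covDeriv (Γchr g' g'inv) f j (vecDeriv f l) = fun z =>
      sff (Γchr g ginv) (Γchr g' g'inv) f z j l + ∑ k, Γchr g ginv z k j l • vecDeriv f k z :=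
    funext fun z => covDeriv_vecDeriv_eq_sff_add _ _ j l
  rw [hgauss, covDeriv_add (differentiableAt_sff hg hg' hf j l) (.fun_sum fun k _ => hΓdf k),
    covDeriv_sum fun k _ => hΓdf k]
  simp only [covDeriv_smul (hΓ _) (hdf _), map_add, map_sum, map_smul, LinearMap.add_apply,
    LinearMap.sum_apply, LinearMap.smul_apply, smul_eq_mul, hiso y _ m,
    metricForm_covDeriv_sff hg hg' hf hiso, metricForm_covDeriv_vecDeriv hg hg' hf2 hiso,
    mul_add, Finset.sum_add_distrib, Finset.mul_sum]
  rw [Finset.sum_comm (f := fun k p => g y m k * _), neg_add_eq_sub]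
  congr 2
  · exact Finset.sum_congr rfl fun k _ => by rw [hg.symm y k, mul_comm]
  · exact Finset.sum_congr rfl fun p _ => Finset.sum_congr rfl fun k _ => by ring

lemma metricForm_single_riem (hg : IsPseudoRiemannianMetric g ginv)
    (hg' : IsPseudoRiemannianMetric g' g'inv) (hf : ContDiff ℝ 3 f) (hiso : IsIsometric g g' f)
    (l i j m : Fin n) :
    metricForm g y (Pi.single m 1) (fun k => Riem g ginv y k l i j) =
      metricForm g' (f y)
          (covDeriv (Γchr g' g'inv) f i (covDeriv (Γchr g' g'inv) f j (vecDeriv f l)) y -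
            covDeriv (Γchr g' g'inv) f j (covDeriv (Γchr g' g'inv) f i (vecDeriv f l)) y)
          (vecDeriv f m y) +
        metricForm g' (f y) (sff (Γchr g ginv) (Γchr g' g'inv) f y j l)
          (sff (Γchr g ginv) (Γchr g' g'inv) f y i m) -
        metricForm g' (f y) (sff (Γchr g ginv) (Γchr g' g'inv) f y i l)
          (sff (Γchr g ginv) (Γchr g' g'inv) f y j m) := by
  rw [metricForm_single_left, map_sub, LinearMap.sub_apply,
    metricForm_covDeriv_covDeriv_vecDeriv hg hg' hf hiso,
    metricForm_covDeriv_covDeriv_vecDeriv hg hg' hf hiso]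
  simp only [Riem, Finset.sum_sub_distrib, mul_add, mul_sub, Finset.sum_add_distrib]
  ring

lemma metricForm_covDeriv_covDeriv_sub (hg' : IsPseudoRiemannianMetric g' g'inv)
    (hf : ContDiff ℝ 3 f) (l i j m : Fin n) :
    metricForm g' (f y)
        (covDeriv (Γchr g' g'inv) f i (covDeriv (Γchr g' g'inv) f j (vecDeriv f l)) y -
          covDeriv (Γchr g' g'inv) f j (covDeriv (Γchr g' g'inv) f i (vecDeriv f l)) y)
        (vecDeriv f m y) =
      ∑ a, ∑ b, ∑ c, ∑ d, (∑ e, g' (f y) a e * Riem g' g'inv (f y) e b c d) *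
        pdmap f y a m * pdmap f y b l * pdmap f y c i * pdmap f y d j := by
  have hf2 : ContDiff ℝ 2 f := hf.of_le (by norm_num)
  rw [covDeriv_covDeriv_sub hg'.contDiff_Γchr hf2
    (contDiff_vecDeriv hf two_add_one_eq_three.le l), hg'.metricForm_comm, metricForm_apply]
  simp only [Matrix.mulVec, dotProduct, curvature_connAlong_apply hg' hf2, Finset.mul_sum,
    Finset.sum_mul]
  refine Finset.sum_congr rfl fun a _ => ?_
  rw [Finset.sum_comm]
  refine Finset.sum_congr rfl fun b _ => ?_
  rw [Finset.sum_comm]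
  refine Finset.sum_congr rfl fun c _ => ?_
  rw [Finset.sum_comm]
  refine Finset.sum_congr rfl fun d _ => Finset.sum_congr rfl fun e _ => ?_
  simp only [vecDeriv]
  ring

lemma metricForm_single_riemPull (hg : IsPseudoRiemannianMetric g ginv)
    (hg' : IsPseudoRiemannianMetric g' g'inv) (hf : ContDiff ℝ 3 f) (l i j m : Fin n) :
    metricForm g y (Pi.single m 1) (fun k => RiemPull g ginv g' g'inv f y k l i j) =
      metricForm g' (f y)
        (covDeriv (Γchr g' g'inv) f i (covDeriv (Γchr g' g'inv) f j (vecDeriv f l)) y -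
          covDeriv (Γchr g' g'inv) f j (covDeriv (Γchr g' g'inv) f i (vecDeriv f l)) y)
        (vecDeriv f m y) := by
  rw [metricForm_covDeriv_covDeriv_sub hg' hf, metricForm_single_left]
  exact congrFun (hg.of_mulVec_of_inv_mulVec y _) m

lemma IsShapeOperatorAt.metricForm_apply_single (hg : IsPseudoRiemannianMetric g ginv)
    {P : (Fin n' → ℝ) → (Fin n → ℝ) → Fin n → ℝ} (hP : IsShapeOperatorAt g ginv g' g'inv f y P)
    {ξ : Fin n' → ℝ} (hξ : ∀ k, metricForm g' (f y) ξ (vecDeriv f k y) = 0) (i m : Fin n) :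
    metricForm g y (Pi.single m 1) (P ξ (Pi.single i 1)) =
      metricForm g' (f y) (sff (Γchr g ginv) (Γchr g' g'inv) f y i m) ξ := by
  rw [hg.metricForm_comm, hP ξ fun Z => by simp [hξ]]
  simp [Pi.single_apply, ite_smul]

lemma riem_eq_shapeOperator_sub_add_riemPull (hg : IsPseudoRiemannianMetric g ginv)
    (hg' : IsPseudoRiemannianMetric g' g'inv) (hf : ContDiff ℝ 3 f) (hiso : IsIsometric g g' f)
    {P : (Fin n' → ℝ) → (Fin n → ℝ) → Fin n → ℝ} (hP : IsShapeOperatorAt g ginv g' g'inv f y P)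
    (m l i j : Fin n) :
    Riem g ginv y m l i j =
      P (sff (Γchr g ginv) (Γchr g' g'inv) f y l j) (Pi.single i 1) m -
        P (sff (Γchr g ginv) (Γchr g' g'inv) f y l i) (Pi.single j 1) m +
        RiemPull g ginv g' g'inv f y m l i j := by
  have hf2 : ContDiff ℝ 2 f := hf.of_le (by norm_num)
  have hPA (i j k : Fin n) := hP.metricForm_apply_single hg
    (metricForm_sff_vecDeriv (y := y) hg hg' hf2 hiso l j) i k
  suffices h : (fun m => Riem g ginv y m l i j) =
      P (sff (Γchr g ginv) (Γchr g' g'inv) f y l j) (Pi.single i 1) -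
        P (sff (Γchr g ginv) (Γchr g' g'inv) f y l i) (Pi.single j 1) +
        fun m => RiemPull g ginv g' g'inv f y m l i j from congrFun h m
  refine hg.eq_of_metricForm_eq (y := y) fun k => ?_
  rw [map_add, map_sub, hPA, hPA, metricForm_single_riem hg hg' hf hiso,
    metricForm_single_riemPull hg hg' hf, hg'.metricForm_comm _ _ (sff _ _ f y i k),
    hg'.metricForm_comm _ _ (sff _ _ f y j k), sff_comm hg hg' hf2 j l, sff_comm hg hg' hf2 i l]
  ring

end GaussEquation

lemma half_mul_sum_sub_swap_mul {ι K : Type*} [Fintype ι] [Field K] [NeZero (2 : K)]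
    {B T : ι → ι → K} (hT : ∀ i j, T i j = -T j i) :
    1 / 2 * ∑ i, ∑ j, (B i j - B j i) * T i j = ∑ i, ∑ j, B i j * T i j := by
  have hswap : ∑ i, ∑ j, B j i * T i j = -∑ i, ∑ j, B i j * T i j := by
    rw [Finset.sum_comm]
    simp only [← Finset.sum_neg_distrib, ← mul_neg, ← hT]
  simp only [sub_mul, Finset.sum_sub_distrib, hswap]
  field_simp
  ring

section CliffordMultiplication

lemma sInner_cl_skew (v : ℝ × ℝ) (s t : Spinor) : sInner s (cl v t) = -sInner t (cl v s) := by
  simp [sInner, cl]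
  ring

lemma sInner_cl (v : ℝ × ℝ) (s t : Spinor) :
    sInner s (cl v t) = v.1 * sInner s (cl (1, 0) t) + v.2 * sInner s (cl (0, 1) t) := by
  simp [sInner, cl]
  ring

end CliffordMultiplication

theorem curvature_term_isometric_immersion_general {n n' : ℕ}
    {g ginv : (Fin n → ℝ) → Fin n → Fin n → ℝ} {g' g'inv : (Fin n' → ℝ) → Fin n' → Fin n' → ℝ}
    (hg : IsPseudoRiemannianMetric g ginv) (hg' : IsPseudoRiemannianMetric g' g'inv)
    {f : (Fin n → ℝ) → Fin n' → ℝ} (hf : ContDiff ℝ 3 f) (hiso : IsIsometric g g' f)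
    {y : Fin n → ℝ} {P : (Fin n' → ℝ) → (Fin n → ℝ) → Fin n → ℝ}
    (hP : IsShapeOperatorAt g ginv g' g'inv f y P)
    (v : Fin n → ℝ × ℝ) (s : Fin n → Spinor) (m : Fin n) :
    1 / 2 * (∑ l, ∑ i, ∑ j, Riem g ginv y m l i j * sInner (s i) (cl (v l) (s j))) =
      (∑ i, ∑ j, ∑ l, P (sff (Γchr g ginv) (Γchr g' g'inv) f y l j) (Pi.single i 1) m *
        ((v l).1 * sInner (s i) (cl (1, 0) (s j)) + (v l).2 * sInner (s i) (cl (0, 1) (s j)))) +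
      1 / 2 * (∑ l, ∑ i, ∑ j,
        RiemPull g ginv g' g'inv f y m l i j * sInner (s i) (cl (v l) (s j))) := by
  have hshape (l : Fin n) := half_mul_sum_sub_swap_mul
    (B := fun i j => P (sff (Γchr g ginv) (Γchr g' g'inv) f y l j) (Pi.single i 1) m)
    fun i j => sInner_cl_skew (v l) (s i) (s j)
  simp only [← sInner_cl, riem_eq_shapeOperator_sub_add_riemPull hg hg' hf hiso hP,
    add_mul _ (RiemPull ..), Finset.sum_add_distrib, mul_add]
  rw [Finset.mul_sum, Finset.sum_congr rfl fun l _ => hshape l, Finset.sum_comm]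
  exact congrArg (· + _) (Finset.sum_congr rfl fun i _ => Finset.sum_comm)

/-- **The curvature term along an isometric immersion (equation of Gauss).**
Let `f : N → N'` be an isometric immersion with second fundamental form `A` and shape
operator `P`, related by `⟨P(ξ;X),Y⟩_{TN} = ⟨A(X,Y),ξ⟩_{TN'}` for tangent `X, Y` and
normal `ξ`.  Then, for every map `φ : M → N` with spinor field `ψ` along `φ`, the
curvature terms satisfy `R(φ,ψ) = P(𝒜(dφ(e_α), e_α·ψ); ψ) + R'(φ,ψ)`, where
`R(φ,ψ)^m = ½ R^m_{lij}(φ) ⟨ψ^i, ∇φ^l·ψ^j⟩`,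
`P(𝒜(dφ(e_α),e_α·ψ);ψ)^m = P(A(∂_{y^l},∂_{y^j});∂_{y^i})^m ⟨ψ^i, e_α·ψ^j⟩ φ^l_α`, and
`R'(φ,ψ)^m = ½ R'^m_{lij}(φ) ⟨ψ^i, ∇φ^l·ψ^j⟩` is formed from the pulled-back curvature
of `N'`. -/
theorem curvature_term_isometric_immersion
    {n n' : ℕ}
    (g ginv : (Fin n → ℝ) → Fin n → Fin n → ℝ)
    (g' g'inv : (Fin n' → ℝ) → Fin n' → Fin n' → ℝ)
    (hg : ContDiff ℝ (⊤ : ℕ∞) fun y => g y) (hg' : ContDiff ℝ (⊤ : ℕ∞) fun y => g' y)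
    (hsymm : ∀ y i j, g y i j = g y j i) (hsymm' : ∀ y a b, g' y a b = g' y b a)
    (hinv : ∀ y i j, (∑ k, ginv y i k * g y k j) = if i = j then (1 : ℝ) else 0)
    (hinv' : ∀ y a b, (∑ c, g'inv y a c * g' y c b) = if a = b then (1 : ℝ) else 0)
    (f : (Fin n → ℝ) → Fin n' → ℝ) (hf : ContDiff ℝ (⊤ : ℕ∞) f)
    -- `f` is an isometric immersion
    (hiso : ∀ y i j, g y i j = ∑ a, ∑ b, g' (f y) a b * pdmap f y a i * pdmap f y b j)
    (himm : ∀ y (X : Fin n → ℝ), (∀ a, (∑ i, X i * pdmap f y a i) = 0) → X = 0)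
    -- the shape operator `P(ξ;X)` of the immersion, characterised by
    -- `⟨P(ξ;X),Y⟩_{TN} = ⟨A(X,Y),ξ⟩_{TN'}` for all normal fields `ξ`
    (P : (Fin n → ℝ) → (Fin n' → ℝ) → (Fin n → ℝ) → Fin n → ℝ)
    (hP : ∀ y (ξ : Fin n' → ℝ),
      (∀ Z : Fin n → ℝ, (∑ a, ∑ b, g' (f y) a b * ξ a * (∑ i, Z i * pdmap f y b i)) = 0) →
      ∀ X Y : Fin n → ℝ,
        (∑ k, ∑ m, g y k m * P y ξ X k * Y m) =
          ∑ a, ∑ b, g' (f y) a b *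
            (∑ i, ∑ j, X i * Y j * sff (Γchr g ginv) (Γchr g' g'inv) f y i j a) * ξ b)
    (φ : ℝ × ℝ → Fin n → ℝ) (hφ : ContDiff ℝ (⊤ : ℕ∞) φ)
    (ψ : ℝ × ℝ → Fin n → Spinor) (hψ : ContDiff ℝ (⊤ : ℕ∞) ψ) :
    ∀ (p : ℝ × ℝ) (m : Fin n),
      (1 / 2) * (∑ l, ∑ i, ∑ j, Riem g ginv (φ p) m l i j *
          sInner (ψ p i) (cl (gradc (fun q => φ q l) p) (ψ p j))) =
        (∑ i, ∑ j, ∑ l,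
          P (φ p) (fun a => sff (Γchr g ginv) (Γchr g' g'inv) f (φ p) l j a) (Pi.single i 1) m *
            (pdx (fun q => φ q l) p * sInner (ψ p i) (cl (1, 0) (ψ p j)) +
             pdy (fun q => φ q l) p * sInner (ψ p i) (cl (0, 1) (ψ p j)))) +
        (1 / 2) * (∑ l, ∑ i, ∑ j, RiemPull g ginv g' g'inv f (φ p) m l i j *
          sInner (ψ p i) (cl (gradc (fun q => φ q l) p) (ψ p j))) := by
  intro p m
  have hP' : IsShapeOperatorAt g ginv g' g'inv f (φ p) (P (φ p)) := fun ξ hξ X Y => by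
    simp only [metricForm_apply, Finset.sum_apply, Pi.smul_apply, smul_eq_mul] at hξ ⊢
    exact hP (φ p) ξ hξ X Y
  exact curvature_term_isometric_immersion_general
    ⟨contDiff_infty.1 hg 2, hsymm, hinv⟩ ⟨contDiff_infty.1 hg' 2, hsymm', hinv'⟩
    (contDiff_infty.1 hf 3)
    (fun y i j => (metricForm_apply _ _ _ _).trans (hiso y i j).symm) hP'
    (fun l => gradc (fun q => φ q l) p) (ψ p) m
end
end

section
/- (No energy loss of the spinors on necks) In the blow-up of a sequence of smooth Dirac-harmonic maps (φ_k,ψ_k): M → S^n with E(φ_k,ψ_k) ≤ Λ around a blow-up point p with a single bubble, with scales λ_k → 0, centers x_k → p, and neck annuli A(δ,R,k) := {x : λ_k R ≤ |x − x_k| ≤ δ}, one has ‖ψ_k‖_{L⁴(A(δ,R,k))} ≤ C√ε + Cε^{1/4} for k, R large and δ small; consequently lim_{R→∞} lim_{δ→0} lim_{k→∞} E(ψ_k; A(δ,R,k)) = 0, where E(ψ_k; A) := ∫_A |ψ_k|⁴. -/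
noncomputable section

open MeasureTheory Complex Filter
open scoped ENNReal NNReal

/-- `(φ,ψ)` is a smooth Dirac-harmonic map from the flat domain `D` into
`S^n ⊆ ℝ^{n+1}` (in the extrinsic form of the equations):  `φ` takes values in `S^n`,
`ψ` is a spinor field along `φ`, and
`∂̸ψ^m = -Σ_i (∇φ^i·ψ^i) ⊗ φ^m`, `Δφ^m = -|dφ|² φ^m + φ^i_α ⟨e_α·ψ^i, ψ^m⟩`,
equivalently `D̸ψ = 0` and `τ(φ) = R(φ,ψ)`. -/
def IsDiracHarmonicSphere (n : ℕ) (D : Set (ℝ × ℝ)) (φ : ℝ × ℝ → Fin (n + 1) → ℝ)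
    (ψ : ℝ × ℝ → Fin (n + 1) → Spinor) : Prop :=
  ContDiffOn ℝ (⊤ : ℕ∞) φ D ∧ ContDiffOn ℝ (⊤ : ℕ∞) ψ D ∧
  (∀ p ∈ D, ∑ i, (φ p i) ^ 2 = 1) ∧
  (∀ p ∈ D, ∑ i, φ p i • ψ p i = (0 : Spinor)) ∧
  (∀ p ∈ D, ∀ m, diracOp (fun q => ψ q m) p =
    -(φ p m) • ∑ i, cl (gradc (fun q => φ q i) p) (ψ p i)) ∧
  (∀ p ∈ D, ∀ m, lap (fun q => φ q m) p =
    -(eDen φ p) * φ p m +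
    ∑ i, (pdx (fun q => φ q i) p * sInner (cl (1, 0) (ψ p i)) (ψ p m) +
          pdy (fun q => φ q i) p * sInner (cl (0, 1) (ψ p i)) (ψ p m)))

/-- The neck annulus `A(δ,R,k) = {x : λ_k R ≤ |x - x_k| ≤ δ}`. -/
def neck (xc : ℝ × ℝ) (lam R δ : ℝ) : Set (ℝ × ℝ) :=
  {x | lam * R ≤ dist x xc ∧ dist x xc ≤ δ}

/-!
A Dirac-harmonic spinor satisfies `|∂̸ψ| ≤ N |dφ| |ψ|`. Let `η` be a cut-off which is `1` on the
neck and vanishes off the neck enlarged by one dyadic annulus at either end. The elliptic estimate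
`‖ηψ‖_{L⁴} ≤ C ‖∂̸(ηψ)‖_{L^{4/3}}` and Hölder's inequality give
`‖ηψ‖_{L⁴} ≤ C N ‖dφ‖_{L²} ‖ηψ‖_{L⁴} + C ‖∇η‖_{L²} ‖ψ‖_{L⁴(supp ∇η)}`.
The map loses no energy on the neck, so the first term is absorbed. The second lives on two dyadic
annuli, where `‖∇η‖_{L²}` is bounded by scale invariance and `‖ψ‖_{L⁴}` by `ε^{1/4}`, there being
no concentration. The elliptic estimate itself follows from the Cauchy–Pompeiu formula, which
bounds `|u|` by the Riesz potential of order one of `|∂̸u|`, and the Hardy–Littlewood–Sobolev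
inequality.
-/

lemma ofReal_norm_rpow_eq_enorm_rpow {E : Type*} [NormedAddCommGroup E] {x : E} (hx : x ≠ 0)
    (t : ℝ) :
    ENNReal.ofReal (‖x‖ ^ t) = ‖x‖ₑ ^ t := by
  rw [← ENNReal.ofReal_rpow_of_pos (norm_pos_iff.2 hx), ofReal_norm]

lemma mem_ball_add_smul_iff {E : Type*} [NormedAddCommGroup E] [NormedSpace ℝ E] {x z : E}
    {ρ : ℝ} (hρ : 0 < ρ) : x + ρ • z ∈ Metric.ball x ρ ↔ z ∈ Metric.ball 0 1 := by
  simp [norm_smul, abs_of_pos hρ, mul_lt_iff_lt_one_right hρ]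

section RieszPotential

variable {E : Type*} [NormedAddCommGroup E] [NormedSpace ℝ E] [FiniteDimensional ℝ E]
  [MeasurableSpace E] [BorelSpace E] (μ : Measure E) [μ.IsAddHaarMeasure]

open Module (finrank)
open Metric (ball)

lemma lintegral_eq_ofReal_pow_mul_lintegral_comp_add_smul {F : E → ℝ≥0∞} (hF : Measurable F)
    (x : E) {ρ : ℝ} (hρ : 0 < ρ) :
    ∫⁻ y, F y ∂μ = ENNReal.ofReal (ρ ^ finrank ℝ E) * ∫⁻ z, F (x + ρ • z) ∂μ := by
  rw [← lintegral_map (f := fun y => F (x + y)) (g := (ρ • ·)) (by fun_prop) (by fun_prop),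
    Measure.map_addHaar_smul μ hρ.ne', lintegral_smul_measure, smul_eq_mul, ← mul_assoc,
    ← ENNReal.ofReal_mul (by positivity), abs_of_pos (by positivity),
    mul_inv_cancel₀ (by positivity), ENNReal.ofReal_one, one_mul, lintegral_add_left_eq_self]

lemma setLIntegral_enorm_sub_rpow {S T : Set E} (hS : MeasurableSet S) (hT : MeasurableSet T)
    {x : E} {ρ : ℝ} (hρ : 0 < ρ) (hST : ∀ z, x + ρ • z ∈ S ↔ z ∈ T) (t : ℝ) :
    ∫⁻ y in S, ‖y - x‖ₑ ^ t ∂μ =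
      ENNReal.ofReal ρ ^ (finrank ℝ E + t) * ∫⁻ y in T, ‖y‖ₑ ^ t ∂μ := by
  have hscale (z : E) : S.indicator (fun y => ‖y - x‖ₑ ^ t) (x + ρ • z) =
      ENNReal.ofReal ρ ^ t * T.indicator (fun y => ‖y‖ₑ ^ t) z := by
    by_cases hz : z ∈ T
    · rw [Set.indicator_of_mem hz, Set.indicator_of_mem ((hST z).2 hz), add_sub_cancel_left,
        enorm_smul, Real.enorm_of_nonneg hρ.le,
        ENNReal.mul_rpow_of_ne_top ENNReal.ofReal_ne_top enorm_ne_top]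
    · rw [Set.indicator_of_notMem hz, Set.indicator_of_notMem (mt (hST z).1 hz), mul_zero]
  rw [← lintegral_indicator hS, ← lintegral_indicator hT,
    lintegral_eq_ofReal_pow_mul_lintegral_comp_add_smul μ
      (Measurable.indicator (by fun_prop) hS) x hρ]
  simp_rw [hscale]
  rw [lintegral_const_mul _ (Measurable.indicator (by fun_prop) hT), ← mul_assoc,
    ENNReal.ofReal_pow hρ.le, ← ENNReal.rpow_natCast,
    ← ENNReal.rpow_add _ _ (by simpa using hρ) ENNReal.ofReal_ne_top]

lemma setLIntegral_ball_enorm_rpow_lt_top [Nontrivial E] {t : ℝ} (ht : -(finrank ℝ E : ℝ) < t) :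
    ∫⁻ y in ball 0 1, ‖y‖ₑ ^ t ∂μ < ⊤ := by
  have hint : IntegrableOn (fun y : E => ‖y‖ ^ t) (ball 0 1) μ :=
    integrableOn_ball_of_norm_le_rpow (C := 1) (α := -t) Module.finrank_pos (by linarith)
      (ae_of_all _ fun y => by simp [abs_of_nonneg (Real.rpow_nonneg (norm_nonneg y) t)])
      (measurable_norm.pow_const t).aestronglyMeasurable
  refine lt_of_eq_of_lt (lintegral_congr_ae ?_) hint.lintegral_lt_top
  filter_upwards [ae_restrict_of_ae (μ.ae_ne 0)] with y hy
  exact (ofReal_norm_rpow_eq_enorm_rpow hy t).symm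

lemma setLIntegral_compl_ball_enorm_rpow_lt_top {t : ℝ} (ht : t < -(finrank ℝ E : ℝ)) :
    ∫⁻ y in (ball 0 1)ᶜ, ‖y‖ₑ ^ t ∂μ < ⊤ := by
  have ht0 : t < 0 := ht.trans_le (neg_nonpos.2 (Nat.cast_nonneg _))
  have hint := ((integrable_one_add_norm (μ := μ) (r := -t) (by linarith)).const_mul
    ((2 : ℝ) ^ (-t))).lintegral_lt_top
  refine ((setLIntegral_mono' measurableSet_ball.compl fun y hy => ?_).trans
    (setLIntegral_le_lintegral _ _)).trans_lt hint
  have hy1 : 1 ≤ ‖y‖ := by simpa using hy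
  rw [← ofReal_norm_rpow_eq_enorm_rpow (norm_pos_iff.1 (by linarith))]
  refine ENNReal.ofReal_le_ofReal ?_
  calc ‖y‖ ^ t ≤ ((1 + ‖y‖) / 2) ^ t :=
        Real.rpow_le_rpow_of_nonpos (by linarith) (by linarith) ht0.le
    _ = 2 ^ (-t) * (1 + ‖y‖) ^ (- -t) := by
        rw [Real.div_rpow (by positivity) (by norm_num), Real.rpow_neg (by norm_num), neg_neg]
        ring

/-- A bound for the truncated Riesz potential of order `d - 2d/q`: the near part of the kernel
is summed in `L¹`, the far part in `L^q`. -/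
def rieszConst (q : ℝ) : ℝ≥0∞ :=
  ∫⁻ y in ball 0 1, ‖y‖ₑ ^ (-(2 * finrank ℝ E / q)) ∂μ +
    (∫⁻ y in (ball 0 1)ᶜ, ‖y‖ₑ ^ (-(2 * finrank ℝ E : ℝ)) ∂μ) ^ (1 / q)

lemma rieszConst_ne_top [Nontrivial E] {q : ℝ} (hq : 2 < q) : rieszConst μ q ≠ ⊤ := by
  have hd : (0 : ℝ) < finrank ℝ E := Nat.cast_pos.2 Module.finrank_pos
  refine ENNReal.add_ne_top.2 ⟨(setLIntegral_ball_enorm_rpow_lt_top μ ?_).ne,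
    ENNReal.rpow_ne_top_of_nonneg (by positivity)
      (setLIntegral_compl_ball_enorm_rpow_lt_top μ (by linarith)).ne⟩
  rw [neg_lt_neg_iff, div_lt_iff₀ (by linarith)]
  nlinarith

variable {p q : ℝ} {g : E → ℝ≥0∞} {a : ℝ≥0∞}

lemma setLIntegral_ball_indicator_le_mul_enorm_sub_rpow_le (t : ℝ) (g : E → ℝ≥0∞) (a : ℝ≥0∞)
    (x : E) {ρ : ℝ} (hρ : 0 < ρ) :
    ∫⁻ y in ball x ρ, {y | g y ≤ a}.indicator g y * ‖y - x‖ₑ ^ t ∂μ ≤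
      a * (ENNReal.ofReal ρ ^ (finrank ℝ E + t) * ∫⁻ y in ball 0 1, ‖y‖ₑ ^ t ∂μ) := by
  rw [← setLIntegral_enorm_sub_rpow μ measurableSet_ball measurableSet_ball hρ
    (fun z => mem_ball_add_smul_iff hρ),
    ← lintegral_const_mul a (f := fun y => ‖y - x‖ₑ ^ t) (by fun_prop)]
  refine lintegral_mono fun y => mul_le_mul_left ?_ _
  exact Set.indicator_apply_le' id fun _ => zero_le

lemma setLIntegral_compl_ball_indicator_le_mul_enorm_sub_rpow_le (hpq : p.HolderConjugate q)
    (t : ℝ) (hg : Measurable g) (hg1 : ∫⁻ y, g y ^ p ∂μ ≤ 1) (a : ℝ≥0∞) (x : E) {ρ : ℝ}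
    (hρ : 0 < ρ) :
    ∫⁻ y in (ball x ρ)ᶜ, {y | g y ≤ a}.indicator g y * ‖y - x‖ₑ ^ t ∂μ ≤
      (ENNReal.ofReal ρ ^ (finrank ℝ E + t * q) *
        ∫⁻ y in (ball 0 1)ᶜ, ‖y‖ₑ ^ (t * q) ∂μ) ^ (1 / q) := by
  have hp : 0 ≤ p := hpq.nonneg
  calc _ ≤ ∫⁻ y in (ball x ρ)ᶜ, (g * fun y => ‖y - x‖ₑ ^ t) y ∂μ :=
        lintegral_mono fun y => mul_le_mul_left (Set.indicator_le_self _ _ y) _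
    _ ≤ (∫⁻ y in (ball x ρ)ᶜ, g y ^ p ∂μ) ^ (1 / p) *
          (∫⁻ y in (ball x ρ)ᶜ, (‖y - x‖ₑ ^ t) ^ q ∂μ) ^ (1 / q) :=
        ENNReal.lintegral_mul_le_Lp_mul_Lq _ hpq hg.aemeasurable (by fun_prop)
    _ ≤ 1 * (∫⁻ y in (ball x ρ)ᶜ, (‖y - x‖ₑ ^ t) ^ q ∂μ) ^ (1 / q) := by
        gcongr
        exact ENNReal.rpow_le_one ((setLIntegral_le_lintegral _ _).trans hg1) (by positivity)
    _ = _ := by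
        simp_rw [one_mul, ← ENNReal.rpow_mul]
        rw [setLIntegral_enorm_sub_rpow μ measurableSet_ball.compl measurableSet_ball.compl hρ
          (fun z => (mem_ball_add_smul_iff hρ).not)]

/-- Hedberg's splitting: near `x` use `g ≤ a`, far from `x` use Hölder's inequality, and choose
the radius `a ^ (-p / d)` at which the two bounds agree. -/
lemma lintegral_indicator_le_mul_enorm_sub_rpow_le [Nontrivial E] (hpq : p.HolderConjugate q)
    (hg : Measurable g) (hg1 : ∫⁻ y, g y ^ p ∂μ ≤ 1) (ha : a ≠ ⊤) (x : E) :
    ∫⁻ y, {y | g y ≤ a}.indicator g y * ‖y - x‖ₑ ^ (-(2 * finrank ℝ E / q)) ∂μ ≤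
      rieszConst μ q * a ^ (p - 1) := by
  rcases eq_or_ne a 0 with rfl | ha0
  · have hzero (y : E) : {y | g y ≤ 0}.indicator g y = 0 :=
      Set.indicator_apply_eq_zero.2 fun hy => le_zero_iff.1 hy
    simp only [hzero, zero_mul, lintegral_zero, zero_le]
  have hp : 0 < p := hpq.pos
  have hq : 0 < q := hpq.symm.pos
  have hqp : p / q = p - 1 := hpq.div_conj_eq_sub_one
  have hd : (finrank ℝ E : ℝ) ≠ 0 := Nat.cast_ne_zero.2 Module.finrank_pos.ne'
  obtain ⟨ρ, hρ, hρa⟩ : ∃ ρ > (0 : ℝ), ENNReal.ofReal ρ = a ^ (-p / finrank ℝ E) := by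
    have hne : a ^ (-p / finrank ℝ E) ≠ ⊤ := by simp [ha, ha0]
    exact ⟨_, ENNReal.toReal_pos (by simp [ha, ha0]) hne, ENNReal.ofReal_toReal hne⟩
  rw [← lintegral_add_compl _ (measurableSet_ball : MeasurableSet (ball x ρ)), rieszConst,
    add_mul]
  refine add_le_add
    ((setLIntegral_ball_indicator_le_mul_enorm_sub_rpow_le μ _ g a x hρ).trans_eq ?_)
    ((setLIntegral_compl_ball_indicator_le_mul_enorm_sub_rpow_le μ hpq _ hg hg1 a x hρ).trans_eq
      ?_)
  · have hexp : 1 + -p / finrank ℝ E * (finrank ℝ E + -(2 * finrank ℝ E / q)) = p - 1 := by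
      have : 1 + -p / finrank ℝ E * (finrank ℝ E + -(2 * finrank ℝ E / q)) =
        1 - p + 2 * (p / q) := by field_simp; ring
      linarith
    rw [hρa, ← ENNReal.rpow_mul, ← mul_assoc, mul_comm, ← hexp, ENNReal.rpow_add _ _ ha0 ha,
      ENNReal.rpow_one]
  · have hcancel : -(2 * finrank ℝ E / q) * q = -(2 * finrank ℝ E) := by field_simp
    have hexp : -p / finrank ℝ E * ((finrank ℝ E + -(2 * finrank ℝ E)) * (1 / q)) = p - 1 := by
      rw [← hqp]; field_simp; ring
    rw [hρa, hcancel, ENNReal.mul_rpow_of_nonneg _ _ (by positivity), ← ENNReal.rpow_mul,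
      ← ENNReal.rpow_mul, hexp, mul_comm]

section DiagonalEstimate
variable [Nontrivial E] {f : E → ℝ≥0∞}

lemma lintegral_lintegral_mul_indicator_le (hpq : p.HolderConjugate q) (hf : Measurable f)
    (hg : Measurable g) (hf1 : ∫⁻ y, f y ^ p ∂μ ≤ 1) (hg1 : ∫⁻ y, g y ^ p ∂μ ≤ 1) :
    ∫⁻ x, ∫⁻ y, f x * ({y | g y ≤ f x}.indicator g y *
      ‖y - x‖ₑ ^ (-(2 * finrank ℝ E / q))) ∂μ ∂μ ≤ rieszConst μ q := by
  have hp : 0 < p := hpq.pos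
  have hf_top : ∀ᵐ x ∂μ, f x ^ p < ⊤ :=
    ae_lt_top (by fun_prop) (hf1.trans_lt ENNReal.one_lt_top).ne
  calc _ ≤ ∫⁻ x, rieszConst μ q * f x ^ p ∂μ := by
        refine lintegral_mono_ae (hf_top.mono fun x hx => ?_)
        have hx' : f x ≠ ⊤ := ((ENNReal.rpow_lt_top_iff_of_pos hp).1 hx).ne
        rw [lintegral_const_mul' _ _ hx']
        calc f x * _ ≤ f x * (rieszConst μ q * f x ^ (p - 1)) := by
              gcongr
              exact lintegral_indicator_le_mul_enorm_sub_rpow_le μ hpq hg hg1 hx' x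
          _ = rieszConst μ q * (f x ^ (1 : ℝ) * f x ^ (p - 1)) := by
              rw [ENNReal.rpow_one, mul_left_comm]
          _ = rieszConst μ q * f x ^ p := by
              rw [← ENNReal.rpow_add_of_nonneg _ _ zero_le_one hpq.sub_one_pos.le,
                add_sub_cancel]
    _ = rieszConst μ q * ∫⁻ x, f x ^ p ∂μ := lintegral_const_mul _ (by fun_prop)
    _ ≤ rieszConst μ q := mul_le_of_le_one_right' hf1

lemma lintegral_lintegral_mul_enorm_sub_rpow_le_of_le_one (hpq : p.HolderConjugate q)
    (hf : Measurable f) (hg : Measurable g) (hf1 : ∫⁻ y, f y ^ p ∂μ ≤ 1)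
    (hg1 : ∫⁻ y, g y ^ p ∂μ ≤ 1) :
    ∫⁻ x, ∫⁻ y, f x * (g y * ‖y - x‖ₑ ^ (-(2 * finrank ℝ E / q))) ∂μ ∂μ ≤
      2 * rieszConst μ q := by
  set k : E → E → ℝ≥0∞ := fun x y => ‖y - x‖ₑ ^ (-(2 * finrank ℝ E / q)) with hk
  have hk_symm (x y : E) : k x y = k y x := by simp only [hk, enorm_sub_rev x y]
  have hmeas {f g : E → ℝ≥0∞} (hf : Measurable f) (hg : Measurable g) :
      Measurable fun z : E × E => f z.1 * ({y | g y ≤ f z.1}.indicator g z.2 * k z.1 z.2) := by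
    have hind : Measurable fun z : E × E => {y | g y ≤ f z.1}.indicator g z.2 :=
      (hg.comp measurable_snd).indicator
        (measurableSet_le (hg.comp measurable_snd) (hf.comp measurable_fst))
    fun_prop
  calc _ ≤ ∫⁻ x, ∫⁻ y, (f x * ({y | g y ≤ f x}.indicator g y * k x y) +
          g y * ({x | f x ≤ g y}.indicator f x * k y x)) ∂μ ∂μ := by
        refine lintegral_mono fun x => lintegral_mono fun y => ?_
        rcases le_total (g y) (f x) with h | h
        · simp only [Set.indicator_of_mem (show y ∈ {y | g y ≤ f x} from h)]
          exact le_self_add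
        · simp only [Set.indicator_of_mem (show x ∈ {x | f x ≤ g y} from h)]
          rw [hk_symm y x, mul_left_comm (g y)]
          exact le_add_self
    _ = ∫⁻ x, ∫⁻ y, f x * ({y | g y ≤ f x}.indicator g y * k x y) ∂μ ∂μ +
          ∫⁻ x, ∫⁻ y, g y * ({x | f x ≤ g y}.indicator f x * k y x) ∂μ ∂μ := by
        rw [← lintegral_add_left (hmeas hf hg).lintegral_prod_right']
        exact lintegral_congr fun x =>
          lintegral_add_left ((hmeas hf hg).comp measurable_prodMk_left) _
    _ ≤ rieszConst μ q + rieszConst μ q := by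
        rw [lintegral_lintegral_swap
          (f := fun x y => g y * ({x | f x ≤ g y}.indicator f x * k y x))
          ((hmeas hg hf).comp measurable_swap).aemeasurable]
        exact add_le_add (lintegral_lintegral_mul_indicator_le μ hpq hf hg hf1 hg1)
          (lintegral_lintegral_mul_indicator_le μ hpq hg hf hg1 hf1)
    _ = 2 * rieszConst μ q := (two_mul _).symm

lemma lintegral_lintegral_mul_enorm_sub_rpow_le_of_ne_top (hpq : p.HolderConjugate q)
    (hf : Measurable f) (hg : Measurable g)
    (hf0 : ∫⁻ x, f x ^ p ∂μ ≠ 0) (hf_top : ∫⁻ x, f x ^ p ∂μ ≠ ⊤)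
    (hg0 : ∫⁻ x, g x ^ p ∂μ ≠ 0) (hg_top : ∫⁻ x, g x ^ p ∂μ ≠ ⊤) :
    ∫⁻ x, ∫⁻ y, f x * (g y * ‖y - x‖ₑ ^ (-(2 * finrank ℝ E / q))) ∂μ ∂μ ≤
      2 * rieszConst μ q * ((∫⁻ x, f x ^ p ∂μ) ^ (1 / p) * (∫⁻ x, g x ^ p ∂μ) ^ (1 / p)) := by
  have hp : 0 < p := hpq.pos
  have hone := lintegral_lintegral_mul_enorm_sub_rpow_le_of_le_one μ hpq
    (hf.mul_const _ : Measurable (ENNReal.funMulInvSnorm f p μ))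
    (hg.mul_const _ : Measurable (ENNReal.funMulInvSnorm g p μ))
    (ENNReal.lintegral_rpow_funMulInvSnorm_eq_one hp hf0 hf_top).le
    (ENNReal.lintegral_rpow_funMulInvSnorm_eq_one hp hg0 hg_top).le
  set N := (∫⁻ x, f x ^ p ∂μ) ^ (1 / p) * (∫⁻ x, g x ^ p ∂μ) ^ (1 / p)
  have hN : N ≠ ⊤ := by finiteness
  calc _ = ∫⁻ x, ∫⁻ y, N * (ENNReal.funMulInvSnorm f p μ x *
          (ENNReal.funMulInvSnorm g p μ y * ‖y - x‖ₑ ^ (-(2 * finrank ℝ E / q)))) ∂μ ∂μ := by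
        refine lintegral_congr fun x => lintegral_congr fun y => ?_
        rw [ENNReal.fun_eq_funMulInvSnorm_mul_eLpNorm f hf0 hf_top,
          ENNReal.fun_eq_funMulInvSnorm_mul_eLpNorm g hg0 hg_top]
        ring
    _ ≤ 2 * rieszConst μ q * N := by
        simp_rw [lintegral_const_mul' _ _ hN]
        rw [mul_comm N]
        exact mul_le_mul_left hone _

/-- The diagonal case of the Hardy–Littlewood–Sobolev inequality. -/
theorem exists_lintegral_lintegral_mul_enorm_sub_rpow_le (hpq : p.HolderConjugate q)
    (hq : 2 < q) :
    ∃ C : ℝ≥0, ∀ f g : E → ℝ≥0∞, Measurable f → Measurable g →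
      ∫⁻ x, ∫⁻ y, f x * (g y * ‖y - x‖ₑ ^ (-(2 * finrank ℝ E / q))) ∂μ ∂μ ≤
        C * ((∫⁻ x, f x ^ p ∂μ) ^ (1 / p) * (∫⁻ x, g x ^ p ∂μ) ^ (1 / p)) := by
  refine ⟨(2 * rieszConst μ q + 1).toNNReal, fun f g hf hg => ?_⟩
  rw [ENNReal.coe_toNNReal (by finiteness [rieszConst_ne_top μ hq])]
  have hp : 0 < p := hpq.pos
  rcases eq_or_ne (∫⁻ x, f x ^ p ∂μ) 0 with hf0 | hf0
  · have hfae := ENNReal.ae_eq_zero_of_lintegral_rpow_eq_zero hp.le hf.aemeasurable hf0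
    rw [lintegral_eq_zero_of_ae_eq_zero (hfae.mono fun x hx => by simp [hx])]
    exact zero_le
  rcases eq_or_ne (∫⁻ x, g x ^ p ∂μ) 0 with hg0 | hg0
  · have hgae := ENNReal.ae_eq_zero_of_lintegral_rpow_eq_zero hp.le hg.aemeasurable hg0
    have hinner (x : E) :
        ∫⁻ y, f x * (g y * ‖y - x‖ₑ ^ (-(2 * finrank ℝ E / q))) ∂μ = 0 :=
      lintegral_eq_zero_of_ae_eq_zero (hgae.mono fun y hy => by simp [hy])
    simp only [hinner, lintegral_zero, zero_le]
  by_cases htop : (∫⁻ x, f x ^ p ∂μ) = ⊤ ∨ (∫⁻ x, g x ^ p ∂μ) = ⊤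
  · have hnorm : (∫⁻ x, f x ^ p ∂μ) ^ (1 / p) * (∫⁻ x, g x ^ p ∂μ) ^ (1 / p) = ⊤ := by
      rcases htop with h | h <;> simp [h, hf0, hg0, hp, hp.le]
    rw [hnorm, ENNReal.mul_top (by simp)]
    exact le_top
  obtain ⟨hf_top, hg_top⟩ := not_or.1 htop
  exact (lintegral_lintegral_mul_enorm_sub_rpow_le_of_ne_top μ hpq hf hg hf0 hf_top hg0
    hg_top).trans (mul_le_mul_left le_self_add _)

end DiagonalEstimate

end RieszPotential

section CauchyPompeiu

variable {E : Type*} [NormedAddCommGroup E] [NormedSpace ℝ E]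

/-- The unit vector `e_r = (cos θ, sin θ)` of polar coordinates. -/
def radialVec (θ : ℝ) : ℝ × ℝ := (Real.cos θ, Real.sin θ)

/-- The unit vector `e_θ = (-sin θ, cos θ)` of polar coordinates. -/
def angularVec (θ : ℝ) : ℝ × ℝ := (-Real.sin θ, Real.cos θ)

lemma hasDerivAt_radialVec (θ : ℝ) : HasDerivAt radialVec (angularVec θ) θ :=
  (Real.hasDerivAt_cos θ).prodMk (Real.hasDerivAt_sin θ)

@[fun_prop]
lemma continuous_radialVec : Continuous radialVec :=
  Real.continuous_cos.prodMk Real.continuous_sin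

@[fun_prop]
lemma continuous_angularVec : Continuous angularVec :=
  Real.continuous_sin.neg.prodMk Real.continuous_cos

lemma norm_radialVec_le_one (θ : ℝ) : ‖radialVec θ‖ ≤ 1 :=
  max_le (Real.abs_cos_le_one θ) (Real.abs_sin_le_one θ)

lemma one_le_two_mul_norm_radialVec (θ : ℝ) : 1 ≤ 2 * ‖radialVec θ‖ := by
  have hcos : |Real.cos θ| ≤ ‖radialVec θ‖ := norm_fst_le (radialVec θ)
  have hsin : |Real.sin θ| ≤ ‖radialVec θ‖ := norm_snd_le (radialVec θ)
  nlinarith [Real.cos_sq_add_sin_sq θ, sq_abs (Real.cos θ), sq_abs (Real.sin θ),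
    abs_nonneg (Real.cos θ), abs_nonneg (Real.sin θ), norm_radialVec_le_one θ]

section Derivative
variable {f : ℝ × ℝ → E}

lemma continuous_fderiv_apply_of_contDiff (hf : ContDiff ℝ 1 f) {X : Type*} [TopologicalSpace X]
    {g v : X → ℝ × ℝ} (hg : Continuous g) (hv : Continuous v) :
    Continuous fun z => fderiv ℝ f (g z) (v z) :=
  ((hf.continuous_fderiv one_ne_zero).comp hg).clm_apply hv

variable [CompleteSpace E]

lemma integral_fderiv_radialVec (hf : ContDiff ℝ 1 f) (x : ℝ × ℝ) (ρ θ : ℝ) :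
    ∫ r in 0..ρ, fderiv ℝ f (x + r • radialVec θ) (radialVec θ) =
      f (x + ρ • radialVec θ) - f x := by
  have hderiv (r : ℝ) : HasDerivAt (fun r : ℝ => f (x + r • radialVec θ))
      (fderiv ℝ f (x + r • radialVec θ) (radialVec θ)) r := by
    have hline : HasDerivAt (fun r : ℝ => x + r • radialVec θ) (radialVec θ) r := by
      simpa using ((hasDerivAt_id r).smul_const (radialVec θ)).const_add x
    exact ((hf.differentiable one_ne_zero) _).hasFDerivAt.comp_hasDerivAt r hline
  have hcont : Continuous fun r : ℝ => fderiv ℝ f (x + r • radialVec θ) (radialVec θ) :=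
    continuous_fderiv_apply_of_contDiff hf (by fun_prop) (by fun_prop)
  rw [intervalIntegral.integral_eq_sub_of_hasDerivAt (fun r _ => hderiv r)
    (hcont.intervalIntegrable _ _)]
  simp

lemma integral_fderiv_angularVec (hf : ContDiff ℝ 1 f) (x : ℝ × ℝ) {r : ℝ} (hr : r ≠ 0) :
    ∫ θ in -Real.pi..Real.pi, fderiv ℝ f (x + r • radialVec θ) (angularVec θ) = 0 := by
  have hderiv (θ : ℝ) : HasDerivAt (fun θ : ℝ => r⁻¹ • f (x + r • radialVec θ))
      (fderiv ℝ f (x + r • radialVec θ) (angularVec θ)) θ := by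
    have hcirc := ((hasDerivAt_radialVec θ).const_smul r).const_add x
    have hcomp := (((hf.differentiable one_ne_zero) _).hasFDerivAt.comp_hasDerivAt θ
      hcirc).const_smul r⁻¹
    rwa [map_smul, inv_smul_smul₀ hr] at hcomp
  have hcont : Continuous fun θ : ℝ => fderiv ℝ f (x + r • radialVec θ) (angularVec θ) :=
    continuous_fderiv_apply_of_contDiff hf (by fun_prop) (by fun_prop)
  rw [intervalIntegral.integral_eq_sub_of_hasDerivAt (fun θ _ => hderiv θ)
    (hcont.intervalIntegrable _ _)]
  simp [radialVec]

lemma integral_integral_fderiv_angularVec (hf : ContDiff ℝ 1 f) (x : ℝ × ℝ) {ρ : ℝ} (hρ : 0 ≤ ρ) :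
    ∫ θ in -Real.pi..Real.pi, ∫ r in 0..ρ,
      fderiv ℝ f (x + r • radialVec θ) (angularVec θ) = 0 := by
  have hcont : Continuous (Function.uncurry fun θ r : ℝ =>
      fderiv ℝ f (x + r • radialVec θ) (angularVec θ)) :=
    continuous_fderiv_apply_of_contDiff hf (by fun_prop) (by fun_prop)
  rw [intervalIntegral_intervalIntegral_swap ((hcont.continuousOn.integrableOn_compact
    (isCompact_uIcc.prod isCompact_uIcc)).mono_set
      (Set.prod_mono Set.uIoc_subset_uIcc Set.uIoc_subset_uIcc))]
  refine intervalIntegral.integral_zero_ae (ae_of_all _ fun r hr => ?_)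
  rw [Set.uIoc_of_le hρ] at hr
  exact integral_fderiv_angularVec hf x hr.1.ne'

end Derivative

/-- Clifford multiplication by `v` as a continuous linear map. -/
def clCLM (v : ℝ × ℝ) : Spinor →L[ℝ] Spinor :=
  LinearMap.toContinuousLinearMap
    { toFun := cl v
      map_add' := fun s t => by ext <;> simp [cl] <;> ring
      map_smul' := fun c s => by ext <;> simp [cl] <;> ring }

@[simp]
lemma clCLM_apply (v : ℝ × ℝ) (s : Spinor) : clCLM v s = cl v s := rfl

lemma norm_cl (v : ℝ × ℝ) (s : Spinor) : ‖cl v s‖ = √(v.1 ^ 2 + v.2 ^ 2) * ‖s‖ := by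
  have hfst : (cl v s).1 = (-v.1 + v.2 * I) * s.2 := by simp [cl]; ring
  have hsnd : (cl v s).2 = (v.1 + v.2 * I) * s.1 := by simp [cl]; ring
  have hneg : ‖(-v.1 + v.2 * I : ℂ)‖ = √(v.1 ^ 2 + v.2 ^ 2) := by
    rw [← ofReal_neg, norm_add_mul_I, neg_sq]
  rw [Prod.norm_def, Prod.norm_def, hfst, hsnd, norm_mul, norm_mul, hneg, norm_add_mul_I,
    ← mul_max_of_nonneg _ _ (Real.sqrt_nonneg _), max_comm]

lemma norm_cl_radialVec (θ : ℝ) (s : Spinor) : ‖cl (radialVec θ) s‖ = ‖s‖ := by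
  simp [norm_cl, radialVec]

lemma continuous_diracOp {ψ : ℝ × ℝ → Spinor} (hψ : ContDiff ℝ 1 ψ) :
    Continuous (diracOp ψ) :=
  ((clCLM (1, 0)).continuous.comp
    (continuous_fderiv_apply_of_contDiff hψ continuous_id continuous_const)).add
    ((clCLM (0, 1)).continuous.comp
      (continuous_fderiv_apply_of_contDiff hψ continuous_id continuous_const))

lemma cl_radialVec_diracOp (ψ : ℝ × ℝ → Spinor) (p : ℝ × ℝ) (θ : ℝ) :
    cl (radialVec θ) (diracOp ψ p) =
      (clCLM (1, 0) ∘L clCLM (0, 1)) (fderiv ℝ ψ p (angularVec θ)) -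
        fderiv ℝ ψ p (radialVec θ) := by
  have hexpand (a b : ℝ) : fderiv ℝ ψ p (a, b) = a • pdx ψ p + b • pdy ψ p := by
    rw [pdx, pdy, ← map_smul, ← map_smul, ← map_add]; simp
  rw [radialVec, angularVec, hexpand, hexpand, diracOp]
  generalize pdx ψ p = a
  generalize pdy ψ p = b
  ext
  · simp [cl]
    linear_combination (Complex.sin θ * b.1) * I_sq
  · simp [cl]
    linear_combination (Complex.sin θ * b.2) * I_sq

section PolarIntegral
variable {ψ : ℝ × ℝ → Spinor}

lemma integral_cl_radialVec_diracOp (hψ : ContDiff ℝ 1 ψ) (x : ℝ × ℝ) (ρ θ : ℝ) :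
    ∫ r in 0..ρ, cl (radialVec θ) (diracOp ψ (x + r • radialVec θ)) =
      (clCLM (1, 0) ∘L clCLM (0, 1))
        (∫ r in 0..ρ, fderiv ℝ ψ (x + r • radialVec θ) (angularVec θ)) -
      (ψ (x + ρ • radialVec θ) - ψ x) := by
  have hrad : Continuous fun r : ℝ => fderiv ℝ ψ (x + r • radialVec θ) (radialVec θ) :=
    continuous_fderiv_apply_of_contDiff hψ (by fun_prop) (by fun_prop)
  have hang : Continuous fun r : ℝ => fderiv ℝ ψ (x + r • radialVec θ) (angularVec θ) :=
    continuous_fderiv_apply_of_contDiff hψ (by fun_prop) (by fun_prop)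
  have hrot_ang : Continuous fun r : ℝ => (clCLM (1, 0) ∘L clCLM (0, 1))
      (fderiv ℝ ψ (x + r • radialVec θ) (angularVec θ)) := by fun_prop
  simp_rw [cl_radialVec_diracOp]
  rw [intervalIntegral.integral_sub (hrot_ang.intervalIntegrable _ _)
      (hrad.intervalIntegrable _ _), integral_fderiv_radialVec hψ,
    ContinuousLinearMap.intervalIntegral_comp_comm _ (hang.intervalIntegrable _ _)]

lemma integral_integral_cl_radialVec_diracOp (hψ : ContDiff ℝ 1 ψ) (x : ℝ × ℝ) {ρ : ℝ} (hρ : 0 ≤ ρ)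
    (hzero : ∀ θ, ψ (x + ρ • radialVec θ) = 0) :
    ∫ θ in -Real.pi..Real.pi, ∫ r in 0..ρ,
      cl (radialVec θ) (diracOp ψ (x + r • radialVec θ)) = (2 * Real.pi) • ψ x := by
  have hang : Continuous fun θ =>
      ∫ r in 0..ρ, fderiv ℝ ψ (x + r • radialVec θ) (angularVec θ) :=
    intervalIntegral.continuous_parametric_intervalIntegral_of_continuous'
      (continuous_fderiv_apply_of_contDiff hψ (by fun_prop) (by fun_prop)) 0 ρ
  have hrot_ang : Continuous fun θ => (clCLM (1, 0) ∘L clCLM (0, 1))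
      (∫ r in 0..ρ, fderiv ℝ ψ (x + r • radialVec θ) (angularVec θ)) := by fun_prop
  simp_rw [integral_cl_radialVec_diracOp hψ, hzero, zero_sub, sub_neg_eq_add]
  rw [intervalIntegral.integral_add (hrot_ang.intervalIntegrable _ _) (by simp),
    ContinuousLinearMap.intervalIntegral_comp_comm _ (hang.intervalIntegrable _ _),
    integral_integral_fderiv_angularVec hψ x hρ, map_zero, zero_add,
    intervalIntegral.integral_const, sub_neg_eq_add, two_mul]

lemma two_pi_mul_enorm_le_lintegral_lintegral (hψ : ContDiff ℝ 1 ψ) (x : ℝ × ℝ) {ρ : ℝ} (hρ : 0 ≤ ρ)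
    (hzero : ∀ θ, ψ (x + ρ • radialVec θ) = 0) :
    ENNReal.ofReal (2 * Real.pi) * ‖ψ x‖ₑ ≤
      ∫⁻ θ in Set.Ioo (-Real.pi) Real.pi, ∫⁻ r in Set.Ioi (0 : ℝ),
        ‖diracOp ψ (x + r • radialVec θ)‖ₑ := by
  have hpi := Real.pi_pos
  calc ENNReal.ofReal (2 * Real.pi) * ‖ψ x‖ₑ = ‖(2 * Real.pi) • ψ x‖ₑ := by
        rw [enorm_smul, Real.enorm_of_nonneg (by positivity)]
    _ = ‖∫ θ in Set.Ioo (-Real.pi) Real.pi, ∫ r in Set.Ioc 0 ρ,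
          cl (radialVec θ) (diracOp ψ (x + r • radialVec θ))‖ₑ := by
        rw [← integral_integral_cl_radialVec_diracOp hψ x hρ hzero,
          intervalIntegral.integral_of_le (by linarith), integral_Ioc_eq_integral_Ioo]
        simp_rw [intervalIntegral.integral_of_le hρ]
    _ ≤ ∫⁻ θ in Set.Ioo (-Real.pi) Real.pi, ∫⁻ r in Set.Ioc 0 ρ,
          ‖cl (radialVec θ) (diracOp ψ (x + r • radialVec θ))‖ₑ :=
        (enorm_integral_le_lintegral_enorm _).trans
          (lintegral_mono fun θ => enorm_integral_le_lintegral_enorm _)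
    _ ≤ _ := by
        simp_rw [← ofReal_norm, norm_cl_radialVec]
        exact lintegral_mono fun θ => lintegral_mono_set Set.Ioc_subset_Ioi_self

end PolarIntegral

lemma lintegral_eq_lintegral_radialVec (x : ℝ × ℝ) (F : ℝ × ℝ → ℝ≥0∞) :
    ∫⁻ y, F y = ∫⁻ z in polarCoord.target,
      ENNReal.ofReal z.1 * F (x + z.1 • radialVec z.2) := by
  rw [← lintegral_add_left_eq_self F x, ← lintegral_comp_polarCoord_symm]
  rfl

lemma exists_forall_eq_zero_on_sphere {F : Type*} [Zero F] {ψ : ℝ × ℝ → F}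
    (hsupp : HasCompactSupport ψ) (x : ℝ × ℝ) :
    ∃ ρ ≥ (0 : ℝ), ∀ θ, ψ (x + ρ • radialVec θ) = 0 := by
  obtain ⟨R, hR, hball⟩ := hsupp.isCompact.isBounded.subset_ball_lt 0 x
  refine ⟨2 * R, by positivity, fun θ => image_eq_zero_of_notMem_tsupport fun hmem => ?_⟩
  have hlt := hball hmem
  rw [mem_ball_iff_norm, add_sub_cancel_left, norm_smul, Real.norm_of_nonneg (by positivity)]
    at hlt
  nlinarith [one_le_two_mul_norm_radialVec θ]

lemma one_le_ofReal_mul_enorm_smul_radialVec_rpow {r : ℝ} (hr : 0 < r) (θ : ℝ) :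
    1 ≤ ENNReal.ofReal r * ‖r • radialVec θ‖ₑ ^ (-1 : ℝ) := by
  have hr0 : ENNReal.ofReal r ≠ 0 := by simpa using hr
  rw [ENNReal.rpow_neg_one, enorm_smul, Real.enorm_of_nonneg hr.le,
    ENNReal.mul_inv (Or.inl hr0) (Or.inl ENNReal.ofReal_ne_top), ← mul_assoc,
    ENNReal.mul_inv_cancel hr0 ENNReal.ofReal_ne_top, one_mul, ENNReal.one_le_inv,
    ← ofReal_norm, ENNReal.ofReal_le_one]
  exact norm_radialVec_le_one θ

lemma two_pi_mul_enorm_le_lintegral {ψ : ℝ × ℝ → Spinor} (hψ : ContDiff ℝ 1 ψ)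
    (hsupp : HasCompactSupport ψ) (x : ℝ × ℝ) :
    ENNReal.ofReal (2 * Real.pi) * ‖ψ x‖ₑ ≤
      ∫⁻ y, ‖diracOp ψ y‖ₑ * ‖y - x‖ₑ ^ (-1 : ℝ) := by
  obtain ⟨ρ, hρ, hzero⟩ := exists_forall_eq_zero_on_sphere hsupp x
  have hmeas : Measurable (diracOp ψ) := (continuous_diracOp hψ).measurable
  refine (two_pi_mul_enorm_le_lintegral_lintegral hψ x hρ hzero).trans ?_
  rw [lintegral_eq_lintegral_radialVec x, polarCoord_target, Measure.volume_eq_prod,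
    ← Measure.prod_restrict, lintegral_prod_symm' _ (by fun_prop)]
  refine lintegral_mono fun θ => setLIntegral_mono' measurableSet_Ioi fun r hr => ?_
  rw [add_sub_cancel_left, mul_left_comm]
  exact le_mul_of_one_le_right' (one_le_ofReal_mul_enorm_smul_radialVec_rpow hr θ)

end CauchyPompeiu

section EllipticEstimate

lemma lintegral_lintegral_enorm_pow_three_mul_le {ψ : ℝ × ℝ → Spinor} (hψ : ContDiff ℝ 1 ψ)
    (hsupp : HasCompactSupport ψ) :
    ∫⁻ x, ‖ψ x‖ₑ ^ 4 ≤
      ∫⁻ x, ∫⁻ y, ‖ψ x‖ₑ ^ 3 * (‖diracOp ψ y‖ₑ * ‖y - x‖ₑ ^ (-1 : ℝ)) := by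
  have hmeas : Measurable (diracOp ψ) := (continuous_diracOp hψ).measurable
  have hpi : 1 ≤ ENNReal.ofReal (2 * Real.pi) := by
    rw [ENNReal.one_le_ofReal]
    linarith [Real.pi_gt_three]
  refine lintegral_mono fun x => ?_
  rw [lintegral_const_mul _ (by fun_prop)]
  calc ‖ψ x‖ₑ ^ 4 = ‖ψ x‖ₑ ^ 3 * ‖ψ x‖ₑ := pow_succ _ _
    _ ≤ ‖ψ x‖ₑ ^ 3 * (ENNReal.ofReal (2 * Real.pi) * ‖ψ x‖ₑ) := by
        gcongr
        exact le_mul_of_one_le_left' hpi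
    _ ≤ _ := by
        gcongr
        exact two_pi_mul_enorm_le_lintegral hψ hsupp x

lemma ennreal_le_of_pow_succ_le_pow_mul {X Y : ℝ≥0∞} (n : ℕ) (hX : X ≠ ⊤)
    (h : X ^ (n + 1) ≤ X ^ n * Y) : X ≤ Y := by
  rcases eq_or_ne X 0 with rfl | hX0
  · exact zero_le
  · rw [pow_succ] at h
    exact (ENNReal.mul_le_mul_iff_right (pow_ne_zero n hX0) (by finiteness)).1 h

/-- Testing the Cauchy–Pompeiu bound for `ψ` against `‖ψ‖ ^ 3` turns the
Hardy–Littlewood–Sobolev inequality into the elliptic estimate. -/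
theorem exists_eLpNorm_le_mul_eLpNorm_diracOp :
    ∃ K : ℝ≥0, ∀ ψ : ℝ × ℝ → Spinor, ContDiff ℝ 1 ψ → HasCompactSupport ψ →
      eLpNorm ψ 4 volume ≤ K * eLpNorm (diracOp ψ) (4 / 3) volume := by
  have hpq : (4 / 3 : ℝ).HolderConjugate 4 := by constructor <;> norm_num
  obtain ⟨K, hK⟩ := exists_lintegral_lintegral_mul_enorm_sub_rpow_le
    (volume : Measure (ℝ × ℝ)) hpq (by norm_num)
  refine ⟨K, fun ψ hψ hsupp => ?_⟩
  have hX : eLpNorm ψ 4 volume ≠ ⊤ := (hψ.continuous.memLp_of_hasCompactSupport hsupp).2.ne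
  have hX_pow : ∫⁻ x, ‖ψ x‖ₑ ^ 4 = eLpNorm ψ 4 volume ^ 4 := by
    simp_rw [← ENNReal.rpow_natCast]
    rw [eLpNorm_eq_lintegral_rpow_enorm_toReal (by simp) (by simp), ← ENNReal.rpow_mul]
    norm_num
  have hcube : (∫⁻ x, (‖ψ x‖ₑ ^ 3) ^ (4 / 3 : ℝ)) ^ (1 / (4 / 3) : ℝ) =
      eLpNorm ψ 4 volume ^ 3 := by
    have hpow (x : ℝ × ℝ) : (‖ψ x‖ₑ ^ 3) ^ (4 / 3 : ℝ) = ‖ψ x‖ₑ ^ 4 := by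
      rw [← ENNReal.rpow_natCast, ← ENNReal.rpow_mul, ← ENNReal.rpow_natCast]
      norm_num
    simp_rw [hpow]
    rw [hX_pow, ← ENNReal.rpow_natCast, ← ENNReal.rpow_mul, ← ENNReal.rpow_natCast]
    norm_num
  have hdirac : (∫⁻ y, ‖diracOp ψ y‖ₑ ^ (4 / 3 : ℝ)) ^ (1 / (4 / 3) : ℝ) =
      eLpNorm (diracOp ψ) (4 / 3) volume := by
    rw [eLpNorm_eq_lintegral_rpow_enorm_toReal (by simp)
      (ENNReal.div_ne_top (by simp) (by simp))]
    simp
  refine ennreal_le_of_pow_succ_le_pow_mul 3 hX ?_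
  have hHLS := hK (fun x => ‖ψ x‖ₑ ^ 3) (fun y => ‖diracOp ψ y‖ₑ)
    (hψ.continuous.measurable.enorm.pow_const _) (continuous_diracOp hψ).measurable.enorm
  rw [hcube, hdirac, mul_left_comm] at hHLS
  rw [← hX_pow]
  refine (lintegral_lintegral_enorm_pow_three_mul_le hψ hsupp).trans (le_of_eq_of_le ?_ hHLS)
  norm_num [Module.finrank_prod]

end EllipticEstimate

section AnnularCutoff

open Metric (ball closedBall mem_closedBall)

/-- The closed annulus of radii `a` and `b` about `c`. -/
def closedAnnulus {X : Type*} [PseudoMetricSpace X] (c : X) (a b : ℝ) : Set X :=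
  {x | a ≤ dist x c ∧ dist x c ≤ b}

lemma neck_eq_closedAnnulus (c : ℝ × ℝ) (lam R δ : ℝ) :
    neck c lam R δ = closedAnnulus c (lam * R) δ := rfl

section Metric
variable {X : Type*} [PseudoMetricSpace X] (c : X) {a b a' b' : ℝ}

lemma closedAnnulus_subset_closedAnnulus (ha : a' ≤ a) (hb : b ≤ b') :
    closedAnnulus c a b ⊆ closedAnnulus c a' b' :=
  fun _ hx => ⟨ha.trans hx.1, hx.2.trans hb⟩

lemma closedAnnulus_subset_closedBall : closedAnnulus c a b ⊆ closedBall c b :=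
  fun _ hx => hx.2

lemma isClosed_closedAnnulus : IsClosed (closedAnnulus c a b) :=
  have hdist : Continuous fun x => dist x c := by fun_prop
  (isClosed_le continuous_const hdist).inter (isClosed_le hdist continuous_const)

lemma isCompact_closedAnnulus [ProperSpace X] : IsCompact (closedAnnulus c a b) :=
  (isCompact_closedBall c b).of_isClosed_subset (isClosed_closedAnnulus c)
    (closedAnnulus_subset_closedBall c)

lemma measurableSet_closedAnnulus [MeasurableSpace X] [BorelSpace X] :
    MeasurableSet (closedAnnulus c a b) :=
  (isClosed_closedAnnulus c).measurableSet

end Metric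

variable {E : Type*} [NormedAddCommGroup E] [NormedSpace ℝ E]

section Rescaling
variable {F : Type*} [NormedAddCommGroup F] [NormedSpace ℝ F]

lemma fderiv_comp_add_smul (f : E → F) (c : E) (ρ : ℝ) (z : E) :
    fderiv ℝ (fun z => f (c + ρ • z)) z = ρ • fderiv ℝ f (c + ρ • z) := by
  rw [fderiv_comp_smul (f := fun w => f (c + w)), fderiv_comp_add_left]

lemma eLpNorm_fderiv_comp_add_smul [FiniteDimensional ℝ E] [Nontrivial E] [MeasurableSpace E]
    [BorelSpace E] (μ : Measure E) [μ.IsAddHaarMeasure] {f : E → F} (hf : ContDiff ℝ 1 f)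
    (c : E) {ρ : ℝ} (hρ : 0 < ρ) :
    eLpNorm (fderiv ℝ fun z => f (c + ρ • z)) (Module.finrank ℝ E) μ =
      eLpNorm (fderiv ℝ f) (Module.finrank ℝ E) μ := by
  have hd : (Module.finrank ℝ E : ℝ≥0∞) ≠ 0 := Nat.cast_ne_zero.2 Module.finrank_pos.ne'
  have hcont : Continuous (fderiv ℝ f) := hf.continuous_fderiv one_ne_zero
  rw [eLpNorm_eq_lintegral_rpow_enorm_toReal hd (by simp),
    eLpNorm_eq_lintegral_rpow_enorm_toReal hd (by simp)]
  congr 1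
  rw [lintegral_eq_ofReal_pow_mul_lintegral_comp_add_smul μ
    (F := fun y => ‖fderiv ℝ f y‖ₑ ^ (Module.finrank ℝ E : ℝ≥0∞).toReal)
    (hcont.enorm.measurable.pow_const _) c hρ,
    ← lintegral_const_mul' _ _ ENNReal.ofReal_ne_top]
  refine lintegral_congr fun z => ?_
  rw [fderiv_comp_add_smul, enorm_smul, ENNReal.mul_rpow_of_nonneg _ _ ENNReal.toReal_nonneg,
    Real.enorm_of_nonneg hρ.le, ENNReal.toReal_natCast, ENNReal.rpow_natCast,
    ENNReal.ofReal_pow hρ.le]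

end Rescaling

/-- The smooth bump function about `c` that is `1` up to radius `ρ` and `0` from radius `2ρ`. -/
def dyadicBump (c : E) {ρ : ℝ} (hρ : 0 < ρ) : ContDiffBump c :=
  ⟨ρ, 2 * ρ, hρ, by linarith⟩

variable [HasContDiffBump E] (c : E) {x : E} {ρ : ℝ} (hρ : 0 < ρ)

lemma dyadicBump_comp_add_smul :
    (fun z => dyadicBump c hρ (c + ρ • z)) = dyadicBump (0 : E) one_pos := by
  ext z
  simp [dyadicBump, ContDiffBump.toFun, hρ.ne', smul_smul]

lemma dyadicBump_eq_one (hx : dist x c ≤ ρ) : dyadicBump c hρ x = 1 :=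
  (dyadicBump c hρ).one_of_mem_closedBall hx

lemma dyadicBump_eq_zero (hx : 2 * ρ ≤ dist x c) : dyadicBump c hρ x = 0 :=
  (dyadicBump c hρ).zero_of_le_dist hx

lemma fderiv_dyadicBump_of_notMem (hx : x ∉ closedAnnulus c ρ (2 * ρ)) :
    fderiv ℝ (dyadicBump c hρ) x = 0 := by
  rcases not_and_or.1 hx with hx | hx
  · rw [((dyadicBump c hρ).eventuallyEq_one_of_mem_ball (not_le.1 hx)).fderiv_eq]
    exact fderiv_const_apply 1
  · have hx' : x ∉ tsupport (dyadicBump c hρ) := by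
      rw [ContDiffBump.tsupport_eq]
      exact hx
    exact fderiv_of_notMem_tsupport ℝ hx'

variable {r δ : ℝ} (hr : 0 < r) (hδ : 0 < δ)

/-- A cut-off function that is `1` on the annulus of radii `r` and `δ` and is supported in the
annulus of radii `r / 2` and `2δ`. -/
def annularCutoff (x : E) : ℝ :=
  dyadicBump c hδ x - dyadicBump c (half_pos hr) x

lemma contDiff_annularCutoff : ContDiff ℝ 1 (annularCutoff c hr hδ) :=
  (dyadicBump c hδ).contDiff.sub (dyadicBump c (half_pos hr)).contDiff

lemma annularCutoff_eq_one (hx : x ∈ closedAnnulus c r δ) : annularCutoff c hr hδ x = 1 := by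
  rw [annularCutoff, dyadicBump_eq_one c hδ hx.2,
    dyadicBump_eq_zero c _ (by linarith [hx.1]), sub_zero]

lemma tsupport_annularCutoff_subset (hrδ : r ≤ δ) :
    tsupport (annularCutoff c hr hδ) ⊆ closedAnnulus c (r / 2) (2 * δ) := by
  refine closure_minimal (fun x hx => ?_) (isClosed_closedAnnulus c)
  by_contra hmem
  refine hx ?_
  rcases not_and_or.1 hmem with h | h
  · rw [annularCutoff, dyadicBump_eq_one c hδ (by linarith),
      dyadicBump_eq_one c (half_pos hr) (by linarith), sub_self]
  · rw [annularCutoff, dyadicBump_eq_zero c hδ (by linarith),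
      dyadicBump_eq_zero c (half_pos hr) (by linarith), sub_self]

lemma hasCompactSupport_annularCutoff [ProperSpace E] (hrδ : r ≤ δ) :
    HasCompactSupport (annularCutoff c hr hδ) :=
  (isCompact_closedAnnulus c).of_isClosed_subset (isClosed_tsupport _)
    (tsupport_annularCutoff_subset c hr hδ hrδ)

lemma fderiv_annularCutoff (x : E) :
    fderiv ℝ (annularCutoff c hr hδ) x =
      fderiv ℝ (dyadicBump c hδ) x - fderiv ℝ (dyadicBump c (half_pos hr)) x :=
  fderiv_fun_sub ((dyadicBump c hδ).contDiff.differentiable one_ne_zero x)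
    ((dyadicBump c _).contDiff.differentiable one_ne_zero x)

lemma support_fderiv_annularCutoff_subset :
    Function.support (fderiv ℝ (annularCutoff c hr hδ)) ⊆
      closedAnnulus c (r / 2) r ∪ closedAnnulus c δ (2 * δ) := by
  intro x hx
  by_contra hmem
  obtain ⟨hin, hout⟩ := not_or.1 hmem
  refine hx ?_
  rw [fderiv_annularCutoff, fderiv_dyadicBump_of_notMem c hδ hout,
    fderiv_dyadicBump_of_notMem c (half_pos hr) (by rwa [mul_div_cancel₀ _ two_ne_zero]),
    sub_zero]

/-- The `L^d` norm of a gradient is scale invariant in dimension `d`, so the bound does not depend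
on the radii. -/
lemma exists_eLpNorm_fderiv_annularCutoff_le [FiniteDimensional ℝ E] [Nontrivial E]
    [MeasurableSpace E] [BorelSpace E] (μ : Measure E) [μ.IsAddHaarMeasure] :
    ∃ M : ℝ≥0, ∀ (c : E) {r δ : ℝ} (hr : 0 < r) (hδ : 0 < δ),
      eLpNorm (fderiv ℝ (annularCutoff c hr hδ)) (Module.finrank ℝ E) μ ≤ M := by
  set d : ℝ≥0∞ := (Module.finrank ℝ E : ℝ≥0∞)
  set I := eLpNorm (fderiv ℝ (dyadicBump (0 : E) one_pos)) d μ with hI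
  have hcont (c : E) {ρ : ℝ} (hρ : 0 < ρ) : Continuous (fderiv ℝ (dyadicBump c hρ)) :=
    (dyadicBump c hρ).contDiff.continuous_fderiv one_ne_zero
  have hI_top : I ≠ ⊤ := ((hcont 0 one_pos).memLp_of_hasCompactSupport
    ((dyadicBump 0 one_pos).hasCompactSupport.fderiv ℝ)).2.ne
  have hbump (c : E) {ρ : ℝ} (hρ : 0 < ρ) : eLpNorm (fderiv ℝ (dyadicBump c hρ)) d μ = I := by
    rw [hI, ← dyadicBump_comp_add_smul c hρ,
      eLpNorm_fderiv_comp_add_smul μ (dyadicBump c hρ).contDiff c hρ]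
  refine ⟨(I + I).toNNReal, fun c r δ hr hδ => ?_⟩
  rw [ENNReal.coe_toNNReal (by finiteness), funext (fderiv_annularCutoff c hr hδ)]
  calc _ ≤ eLpNorm (fderiv ℝ (dyadicBump c hδ)) d μ +
        eLpNorm (fderiv ℝ (dyadicBump c (half_pos hr))) d μ :=
      eLpNorm_sub_le (hcont c hδ).aestronglyMeasurable
        (hcont c (half_pos hr)).aestronglyMeasurable (Nat.one_le_cast.2 Module.finrank_pos)
    _ = I + I := by rw [hbump c hδ, hbump c (half_pos hr)]

end AnnularCutoff

section CutOff

lemma contDiff_smul_of_tsupport {E F : Type*} [NormedAddCommGroup E] [NormedSpace ℝ E]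
    [NormedAddCommGroup F] [NormedSpace ℝ F] {n : WithTop ℕ∞} {η : E → ℝ} {u : E → F}
    (hη : ContDiff ℝ n η) (hu : ∀ x ∈ tsupport η, ContDiffAt ℝ n u x) :
    ContDiff ℝ n fun x => η x • u x := by
  refine contDiff_iff_contDiffAt.2 fun x => ?_
  by_cases hx : x ∈ tsupport η
  · exact hη.contDiffAt.smul (hu x hx)
  · have hzero : (fun y => η y • u y) =ᶠ[nhds x] fun _ => 0 := by
      filter_upwards [notMem_tsupport_iff_eventuallyEq.1 hx] with y hy
      simp [hy]
    exact contDiffAt_const.congr_of_eventuallyEq hzero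

lemma diracOp_smul {η : ℝ × ℝ → ℝ} {u : ℝ × ℝ → Spinor} {x : ℝ × ℝ}
    (hη : DifferentiableAt ℝ η x) (hu : DifferentiableAt ℝ u x) :
    diracOp (fun y => η y • u y) x = η x • diracOp u x + cl (gradc η x) (u x) := by
  have hfderiv (v : ℝ × ℝ) : fderiv ℝ (fun y => η y • u y) x v =
      η x • fderiv ℝ u x v + fderiv ℝ η x v • u x := by
    rw [fderiv_fun_smul hη hu]
    simp
  simp only [diracOp, pdx, pdy, gradc, hfderiv]
  ext <;> simp [cl] <;> ring

lemma norm_cl_gradc_le (η : ℝ × ℝ → ℝ) (x : ℝ × ℝ) (s : Spinor) :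
    ‖cl (gradc η x) s‖ ≤ 2 * (‖fderiv ℝ η x‖ * ‖s‖) := by
  have hx : pdx η x ^ 2 ≤ ‖fderiv ℝ η x‖ ^ 2 :=
    sq_le_sq' (abs_le.1 ((fderiv ℝ η x).unit_le_opNorm (1, 0) (by simp))).1
      (abs_le.1 ((fderiv ℝ η x).unit_le_opNorm (1, 0) (by simp))).2
  have hy : pdy η x ^ 2 ≤ ‖fderiv ℝ η x‖ ^ 2 :=
    sq_le_sq' (abs_le.1 ((fderiv ℝ η x).unit_le_opNorm (0, 1) (by simp))).1
      (abs_le.1 ((fderiv ℝ η x).unit_le_opNorm (0, 1) (by simp))).2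
  rw [norm_cl, ← mul_assoc]
  gcongr
  refine Real.sqrt_le_iff.2 ⟨by positivity, ?_⟩
  simp only [gradc]
  nlinarith [sq_nonneg ‖fderiv ℝ η x‖]

lemma norm_diracOp_smul_le {η : ℝ × ℝ → ℝ} {u : ℝ × ℝ → Spinor} {x : ℝ × ℝ} {a b : ℝ}
    (hη : DifferentiableAt ℝ η x) (hu : DifferentiableAt ℝ u x) (hub : ‖u x‖ ≤ b)
    (hdirac : ‖diracOp u x‖ ≤ a * b) :
    ‖diracOp (fun y => η y • u y) x‖ ≤ a * (‖η x‖ * b) + 2 * (‖fderiv ℝ η x‖ * b) := by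
  rw [diracOp_smul hη hu]
  refine (norm_add_le _ _).trans (add_le_add ?_ ((norm_cl_gradc_le η x (u x)).trans (by gcongr)))
  rw [norm_smul, mul_left_comm]
  gcongr

lemma support_diracOp_smul_subset (η : ℝ × ℝ → ℝ) (u : ℝ × ℝ → Spinor) :
    Function.support (diracOp fun x => η x • u x) ⊆ tsupport η := by
  refine fun x hx => tsupport_smul_subset_left η u ?_
  contrapose! hx
  simp [diracOp, pdx, pdy, cl, fderiv_of_notMem_tsupport ℝ hx]

instance holderTriple_two_four_four_thirds : ENNReal.HolderTriple 2 4 (4 / 3) where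
  inv_add_inv_eq_inv := by
    rw [ENNReal.inv_div (by simp) (by simp), ← ENNReal.toReal_eq_toReal_iff' (by simp)
      (ENNReal.div_ne_top (by simp) (by simp)), ENNReal.toReal_add (by simp) (by simp)]
    norm_num

section Component
variable {F : Type*} [NormedAddCommGroup F] [NormedSpace ℝ F]

lemma eLpNorm_smul_le_of_support_subset {α : Type*} [MeasurableSpace α] {μ : Measure α}
    {p q r : ℝ≥0∞} [ENNReal.HolderTriple p q r] {f : α → ℝ} {w : α → F} {T : Set α}
    (hf : AEStronglyMeasurable f μ) (hw : AEStronglyMeasurable w (μ.restrict T))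
    (hfT : Function.support f ⊆ T) :
    eLpNorm (f • w) r μ ≤ eLpNorm f p μ * eLpNorm w q (μ.restrict T) := by
  have hfwT : Function.support (f • w) ⊆ T := fun x hx => hfT fun h => hx (by simp [h])
  rw [← eLpNorm_restrict_eq_of_support_subset hfwT, ← eLpNorm_restrict_eq_of_support_subset hfT]
  exact eLpNorm_smul_le_mul_eLpNorm hw hf.restrict

variable {S T : Set (ℝ × ℝ)} {η : ℝ × ℝ → ℝ} {u : ℝ × ℝ → Spinor} {w : ℝ × ℝ → F}
  {e : ℝ × ℝ → ℝ}

lemma eLpNorm_diracOp_smul_le (hS : MeasurableSet S) (hT : MeasurableSet T) (hTS : T ⊆ S)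
    (hη : ContDiff ℝ 1 η) (hηS : tsupport η ⊆ S) (hηT : Function.support (fderiv ℝ η) ⊆ T)
    (hu : ∀ x ∈ S, DifferentiableAt ℝ u x) (he : ContinuousOn e S) (hw : ContinuousOn w S)
    (huw : ∀ x ∈ S, ‖u x‖ ≤ ‖w x‖) (hdirac : ∀ x ∈ S, ‖diracOp u x‖ ≤ e x * ‖w x‖) :
    eLpNorm (diracOp fun x => η x • u x) (4 / 3) volume ≤
      eLpNorm e 2 (volume.restrict S) * eLpNorm (fun x => η x • w x) 4 volume +
        2 * (eLpNorm (fderiv ℝ η) 2 volume * eLpNorm w 4 (volume.restrict T)) := by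
  have hηw : AEStronglyMeasurable (fun x => η x • w x) (volume.restrict S) :=
    (hη.continuous.continuousOn.smul hw).aestronglyMeasurable hS
  have hDη : Continuous fun x => ‖fderiv ℝ η x‖ := (hη.continuous_fderiv one_ne_zero).norm
  have hDηw : AEStronglyMeasurable ((fun x => ‖fderiv ℝ η x‖) • w) (volume.restrict S) :=
    (hDη.continuousOn.smul hw).aestronglyMeasurable hS
  have hone : (1 : ℝ≥0∞) ≤ 4 / 3 := by
    rw [ENNReal.le_div_iff_mul_le (by simp) (by simp)]
    norm_num
  have hcutoff : eLpNorm ((fun x => ‖fderiv ℝ η x‖) • w) (4 / 3) (volume.restrict S) ≤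
      eLpNorm (fderiv ℝ η) 2 volume * eLpNorm w 4 (volume.restrict T) := by
    refine (eLpNorm_mono_measure _ Measure.restrict_le_self).trans ?_
    rw [← eLpNorm_norm (fderiv ℝ η)]
    exact eLpNorm_smul_le_of_support_subset hDη.aestronglyMeasurable
      ((hw.mono hTS).aestronglyMeasurable hT) fun x hx => hηT fun h => hx (by simp [h])
  calc eLpNorm (diracOp fun x => η x • u x) (4 / 3) volume
      = eLpNorm (diracOp fun x => η x • u x) (4 / 3) (volume.restrict S) :=
        (eLpNorm_restrict_eq_of_support_subset
          ((support_diracOp_smul_subset η u).trans hηS)).symm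
    _ ≤ eLpNorm (fun x => ‖(e • fun x => η x • w x) x‖ +
          ‖((2 : ℝ) • (fun x => ‖fderiv ℝ η x‖) • w) x‖) (4 / 3) (volume.restrict S) := by
        refine eLpNorm_mono_ae_real ((ae_restrict_mem hS).mono fun x hx => ?_)
        refine (norm_diracOp_smul_le (hη.differentiable one_ne_zero x) (hu x hx) (huw x hx)
          (hdirac x hx)).trans ?_
        simp only [Pi.smul_apply, Pi.smul_apply', norm_smul, norm_norm, Real.norm_ofNat]
        gcongr
        exact le_abs_self _
    _ ≤ eLpNorm (e • fun x => η x • w x) (4 / 3) (volume.restrict S) +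
          eLpNorm ((2 : ℝ) • (fun x => ‖fderiv ℝ η x‖) • w) (4 / 3) (volume.restrict S) := by
        rw [← eLpNorm_norm (e • _), ← eLpNorm_norm ((2 : ℝ) • _)]
        exact eLpNorm_add_le ((he.aestronglyMeasurable hS).smul hηw).norm
          (hDηw.const_smul 2).norm hone
    _ ≤ _ := by
        rw [eLpNorm_const_smul, Real.enorm_of_nonneg zero_le_two, ENNReal.ofReal_ofNat]
        gcongr
        refine (eLpNorm_smul_le_mul_eLpNorm (p := 2) (q := 4) hηw
          (he.aestronglyMeasurable hS)).trans ?_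
        gcongr
        exact Measure.restrict_le_self

end Component

lemma eLpNorm_pi_le_sum {α ι : Type*} [Fintype ι] [MeasurableSpace α] {μ : Measure α} {p : ℝ≥0∞}
    {F : ι → Type*} [∀ i, NormedAddCommGroup (F i)] {f : α → ∀ i, F i}
    (hf : ∀ i, AEStronglyMeasurable (fun x => f x i) μ) (hp : 1 ≤ p) :
    eLpNorm f p μ ≤ ∑ i, eLpNorm (fun x => f x i) p μ := by
  have hpoint (x : α) : ‖f x‖ ≤ (∑ i, fun x => ‖f x i‖) x := by
    rw [Finset.sum_apply, pi_norm_le_iff_of_nonneg (by positivity)]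
    exact fun i => Finset.single_le_sum (f := fun i => ‖f x i‖) (fun _ _ => norm_nonneg _)
      (Finset.mem_univ i)
  refine ((eLpNorm_mono_real hpoint).trans (eLpNorm_sum_le (fun i _ => (hf i).norm) hp)).trans ?_
  simp_rw [eLpNorm_norm]
  rfl

lemma exists_eLpNorm_smul_le_of_norm_diracOp_le (ι : Type*) [Fintype ι] :
    ∃ C : ℝ≥0, ∀ {S T : Set (ℝ × ℝ)} {η e : ℝ × ℝ → ℝ} {ψ : ℝ × ℝ → ι → Spinor},
      MeasurableSet S → MeasurableSet T → T ⊆ S →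
      ContDiff ℝ 1 η → HasCompactSupport η → tsupport η ⊆ S →
      Function.support (fderiv ℝ η) ⊆ T →
      (∀ x ∈ S, ContDiffAt ℝ 1 ψ x) → ContinuousOn e S →
      (∀ x ∈ S, ∀ i, ‖diracOp (fun y => ψ y i) x‖ ≤ e x * ‖ψ x‖) →
      eLpNorm (fun x => η x • ψ x) 4 volume ≤
        C * (eLpNorm e 2 (volume.restrict S) * eLpNorm (fun x => η x • ψ x) 4 volume +
          2 * (eLpNorm (fderiv ℝ η) 2 volume * eLpNorm ψ 4 (volume.restrict T))) := by
  obtain ⟨K, hK⟩ := exists_eLpNorm_le_mul_eLpNorm_diracOp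
  refine ⟨Fintype.card ι * K, fun {S T η e ψ} hS hT hTS hη hηc hηS hηT hψ he hdirac => ?_⟩
  have hψi (i : ι) : ∀ x ∈ S, ContDiffAt ℝ 1 (fun y => ψ y i) x :=
    fun x hx => contDiffAt_pi.1 (hψ x hx) i
  have hηψ (i : ι) : ContDiff ℝ 1 fun x => η x • ψ x i :=
    contDiff_smul_of_tsupport hη fun x hx => hψi i x (hηS hx)
  have hψS : ContinuousOn ψ S := fun x hx => (hψ x hx).continuousAt.continuousWithinAt
  refine (eLpNorm_pi_le_sum (fun i => (hηψ i).continuous.aestronglyMeasurable)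
    (by norm_num)).trans ?_
  refine (Finset.sum_le_card_nsmul _ _ _ fun i _ => (hK _ (hηψ i) hηc.smul_right).trans
    (mul_le_mul_right (eLpNorm_diracOp_smul_le hS hT hTS hη hηS hηT
      (fun x hx => (hψi i x hx).differentiableAt one_ne_zero) he hψS
      (fun x _ => norm_le_pi_norm (ψ x) i) fun x hx => hdirac x hx i) _)).trans ?_
  rw [Finset.card_univ, nsmul_eq_mul, ← mul_assoc]
  push_cast
  rfl

lemma ennreal_le_two_mul_of_le_half_add {X Y : ℝ≥0∞} (hX : X ≠ ⊤) (h : X ≤ X / 2 + Y) :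
    X ≤ 2 * Y := by
  have hhalf : X / 2 ≤ Y := by
    refine (ENNReal.add_le_add_iff_left (a := X / 2) (by finiteness)).1 ?_
    rwa [ENNReal.add_halves]
  calc X = 2 * (X / 2) := (ENNReal.mul_div_cancel two_ne_zero ENNReal.ofNat_ne_top).symm
    _ ≤ 2 * Y := by gcongr

lemma exists_eLpNorm_smul_le_of_eLpNorm_le (ι : Type*) [Fintype ι] :
    ∃ C κ : ℝ≥0, 0 < κ ∧
      ∀ {S T : Set (ℝ × ℝ)} {η e : ℝ × ℝ → ℝ} {ψ : ℝ × ℝ → ι → Spinor},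
      MeasurableSet S → MeasurableSet T → T ⊆ S →
      ContDiff ℝ 1 η → HasCompactSupport η → tsupport η ⊆ S →
      Function.support (fderiv ℝ η) ⊆ T →
      (∀ x ∈ S, ContDiffAt ℝ 1 ψ x) → ContinuousOn e S →
      (∀ x ∈ S, ∀ i, ‖diracOp (fun y => ψ y i) x‖ ≤ e x * ‖ψ x‖) →
      eLpNorm e 2 (volume.restrict S) ≤ κ →
      eLpNorm (fun x => η x • ψ x) 4 volume ≤
        C * (eLpNorm (fderiv ℝ η) 2 volume * eLpNorm ψ 4 (volume.restrict T)) := by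
  obtain ⟨C, hC⟩ := exists_eLpNorm_smul_le_of_norm_diracOp_le ι
  refine ⟨4 * C, (2 * (C + 1))⁻¹, by positivity,
    fun {S T η e ψ} hS hT hTS hη hηc hηS hηT hψ he hdirac hsmall => ?_⟩
  have hfinite : eLpNorm (fun x => η x • ψ x) 4 volume ≠ ⊤ :=
    ((contDiff_smul_of_tsupport hη fun x hx =>
      hψ x (hηS hx)).continuous.memLp_of_hasCompactSupport hηc.smul_right).2.ne
  have hhalf : (C : ℝ≥0∞) * eLpNorm e 2 (volume.restrict S) ≤ 2⁻¹ := by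
    have hC_half : C * (2 * (C + 1))⁻¹ ≤ 2⁻¹ := by
      rw [mul_inv, mul_left_comm]
      exact mul_le_of_le_one_right'
        (mul_inv_le_one_of_le₀ (le_add_of_nonneg_right zero_le_one) (by positivity))
    calc (C : ℝ≥0∞) * eLpNorm e 2 (volume.restrict S)
        ≤ (C * (2 * (C + 1))⁻¹ : ℝ≥0) := by
          rw [ENNReal.coe_mul]
          gcongr
      _ ≤ (2⁻¹ : ℝ≥0) := by exact_mod_cast hC_half
      _ = 2⁻¹ := by simp
  refine (ennreal_le_two_mul_of_le_half_add hfinite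
    ((hC hS hT hTS hη hηc hηS hηT hψ he hdirac).trans ?_)).trans_eq
      (b := 2 * (C * (2 * (eLpNorm (fderiv ℝ η) 2 volume * eLpNorm ψ 4 (volume.restrict T))))) ?_
  · rw [mul_add, ← mul_assoc, ENNReal.div_eq_inv_mul]
    gcongr
  · push_cast
    ring

theorem exists_eLpNorm_closedAnnulus_le_of_norm_diracOp_le (ι : Type*) [Fintype ι] :
    ∃ C κ : ℝ≥0, 0 < κ ∧ ∀ {c : ℝ × ℝ} {r δ : ℝ} {e : ℝ × ℝ → ℝ} {ψ : ℝ × ℝ → ι → Spinor},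
      0 < r → r ≤ δ → (∀ x ∈ closedAnnulus c (r / 2) (2 * δ), ContDiffAt ℝ 1 ψ x) →
      ContinuousOn e (closedAnnulus c (r / 2) (2 * δ)) →
      (∀ x ∈ closedAnnulus c (r / 2) (2 * δ), ∀ i,
        ‖diracOp (fun y => ψ y i) x‖ ≤ e x * ‖ψ x‖) →
      eLpNorm e 2 (volume.restrict (closedAnnulus c (r / 2) (2 * δ))) ≤ κ →
      eLpNorm ψ 4 (volume.restrict (closedAnnulus c r δ)) ≤
        C * eLpNorm ψ 4
          (volume.restrict (closedAnnulus c (r / 2) r ∪ closedAnnulus c δ (2 * δ))) := by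
  obtain ⟨C, κ, hκ, hC⟩ := exists_eLpNorm_smul_le_of_eLpNorm_le ι
  obtain ⟨M, hM⟩ := exists_eLpNorm_fderiv_annularCutoff_le (volume : Measure (ℝ × ℝ))
  refine ⟨C * M, κ, hκ, fun {c r δ e ψ} hr hrδ hψ he hdirac hsmall => ?_⟩
  have hδ : 0 < δ := hr.trans_le hrδ
  have hTS : closedAnnulus c (r / 2) r ∪ closedAnnulus c δ (2 * δ) ⊆
      closedAnnulus c (r / 2) (2 * δ) := Set.union_subset
    (closedAnnulus_subset_closedAnnulus c le_rfl (by linarith))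
    (closedAnnulus_subset_closedAnnulus c (by linarith) le_rfl)
  have hgrad : eLpNorm (fderiv ℝ (annularCutoff c hr hδ)) 2 volume ≤ M := by
    simpa using hM c hr hδ
  calc eLpNorm ψ 4 (volume.restrict (closedAnnulus c r δ))
      = eLpNorm (fun x => annularCutoff c hr hδ x • ψ x) 4
          (volume.restrict (closedAnnulus c r δ)) := by
        refine eLpNorm_congr_ae ((ae_restrict_mem (measurableSet_closedAnnulus c)).mono
          fun x hx => ?_)
        simp only [annularCutoff_eq_one c hr hδ hx, one_smul]
    _ ≤ eLpNorm (fun x => annularCutoff c hr hδ x • ψ x) 4 volume :=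
        eLpNorm_mono_measure _ Measure.restrict_le_self
    _ ≤ C * (eLpNorm (fderiv ℝ (annularCutoff c hr hδ)) 2 volume * _) :=
        hC (measurableSet_closedAnnulus c)
          ((measurableSet_closedAnnulus c).union (measurableSet_closedAnnulus c)) hTS
          (contDiff_annularCutoff c hr hδ) (hasCompactSupport_annularCutoff c hr hδ hrδ)
          (tsupport_annularCutoff_subset c hr hδ hrδ)
          (support_fderiv_annularCutoff_subset c hr hδ) hψ he hdirac hsmall
    _ ≤ _ := by
        rw [ENNReal.coe_mul, mul_assoc]
        gcongr

end CutOff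

section EnergyDensities

lemma sInner_self (s : Spinor) : sInner s s = ‖s.1‖ ^ 2 + ‖s.2‖ ^ 2 := by
  simp only [sInner, Complex.mul_conj, Complex.normSq_eq_norm_sq]
  norm_cast

lemma sInner_self_nonneg (s : Spinor) : 0 ≤ sInner s s := by
  rw [sInner_self]
  positivity

lemma norm_sq_le_sInner_self (s : Spinor) : ‖s‖ ^ 2 ≤ sInner s s := by
  rw [sInner_self, Prod.norm_def]
  rcases max_choice ‖s.1‖ ‖s.2‖ with h | h <;> rw [h] <;>
    nlinarith [sq_nonneg ‖s.1‖, sq_nonneg ‖s.2‖]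

lemma sInner_self_le (s : Spinor) : sInner s s ≤ 2 * ‖s‖ ^ 2 := by
  rw [sInner_self, two_mul]
  gcongr
  exacts [norm_fst_le s, norm_snd_le s]

section PsiSq
variable {K : ℕ} {S : Set (ℝ × ℝ)} {ψ : ℝ × ℝ → Fin K → Spinor}

lemma psiSq_nonneg (ψ : ℝ × ℝ → Fin K → Spinor) (x : ℝ × ℝ) : 0 ≤ psiSq ψ x :=
  Finset.sum_nonneg fun i _ => sInner_self_nonneg (ψ x i)

lemma norm_sq_le_psiSq (ψ : ℝ × ℝ → Fin K → Spinor) (x : ℝ × ℝ) : ‖ψ x‖ ^ 2 ≤ psiSq ψ x := by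
  refine (Real.le_sqrt (norm_nonneg _) (psiSq_nonneg ψ x)).1
    ((pi_norm_le_iff_of_nonneg (Real.sqrt_nonneg _)).2 fun i => Real.le_sqrt_of_sq_le ?_)
  exact (norm_sq_le_sInner_self (ψ x i)).trans (Finset.single_le_sum
    (f := fun i => sInner (ψ x i) (ψ x i)) (fun i _ => sInner_self_nonneg (ψ x i))
    (Finset.mem_univ i))

lemma psiSq_le (ψ : ℝ × ℝ → Fin K → Spinor) (x : ℝ × ℝ) : psiSq ψ x ≤ 2 * K * ‖ψ x‖ ^ 2 := by
  calc psiSq ψ x ≤ ∑ _i : Fin K, 2 * ‖ψ x‖ ^ 2 := Finset.sum_le_sum fun i _ =>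
        (sInner_self_le (ψ x i)).trans (by gcongr; exact norm_le_pi_norm (ψ x) i)
    _ = 2 * K * ‖ψ x‖ ^ 2 := by
        rw [Finset.sum_const, Finset.card_univ, Fintype.card_fin, nsmul_eq_mul]
        ring

lemma continuousOn_psiSq (hψ : ContinuousOn ψ S) : ContinuousOn (psiSq ψ) S := by
  unfold psiSq
  simp only [sInner_self]
  fun_prop

end PsiSq

section EDen
variable {K : ℕ} (φ : ℝ × ℝ → Fin K → ℝ) (x : ℝ × ℝ)

lemma eDen_nonneg : 0 ≤ eDen φ x :=
  Finset.sum_nonneg fun _ _ => by positivity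

lemma norm_cl_gradc_le_sqrt_eDen_mul (i : Fin K) (s : Spinor) :
    ‖cl (gradc (fun y => φ y i) x) s‖ ≤ √(eDen φ x) * ‖s‖ := by
  rw [norm_cl]
  gcongr
  exact Finset.single_le_sum
    (f := fun i => pdx (fun y => φ y i) x ^ 2 + pdy (fun y => φ y i) x ^ 2)
    (fun _ _ => by positivity) (Finset.mem_univ i)

end EDen

lemma continuousOn_eDen_of_contDiffOn {K : ℕ} {D : Set (ℝ × ℝ)} (hD : IsOpen D)
    {φ : ℝ × ℝ → Fin K → ℝ} (hφ : ContDiffOn ℝ 1 φ D) : ContinuousOn (eDen φ) D := by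
  have hfderiv (i : Fin K) : ContinuousOn (fderiv ℝ fun y => φ y i) D :=
    (contDiffOn_pi.1 hφ i).continuousOn_fderiv_of_isOpen hD le_rfl
  unfold eDen pdx pdy
  fun_prop

namespace IsDiracHarmonicSphere
variable {n : ℕ} {D : Set (ℝ × ℝ)} {φ : ℝ × ℝ → Fin (n + 1) → ℝ}
  {ψ : ℝ × ℝ → Fin (n + 1) → Spinor}

lemma contDiffOn_spinor (h : IsDiracHarmonicSphere n D φ ψ) : ContDiffOn ℝ 1 ψ D :=
  h.2.1.of_le (by simp)

lemma continuousOn_eDen (h : IsDiracHarmonicSphere n D φ ψ) (hD : IsOpen D) :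
    ContinuousOn (eDen φ) D :=
  continuousOn_eDen_of_contDiffOn hD (h.1.of_le (by simp))

lemma norm_diracOp_le (h : IsDiracHarmonicSphere n D φ ψ) {x : ℝ × ℝ} (hx : x ∈ D)
    (m : Fin (n + 1)) :
    ‖diracOp (fun y => ψ y m) x‖ ≤ (n + 1 : ℕ) * √(eDen φ x) * ‖ψ x‖ := by
  obtain ⟨-, -, hsphere, -, hdirac, -⟩ := h
  have hφ : ‖φ x m‖ ≤ 1 := by
    rw [Real.norm_eq_abs, ← sq_le_one_iff_abs_le_one, ← hsphere x hx]
    exact Finset.single_le_sum (f := fun i => φ x i ^ 2) (fun _ _ => sq_nonneg _)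
      (Finset.mem_univ m)
  calc ‖diracOp (fun y => ψ y m) x‖
      = ‖φ x m‖ * ‖∑ i, cl (gradc (fun y => φ y i) x) (ψ x i)‖ := by
        rw [hdirac x hx m, norm_smul, norm_neg]
    _ ≤ 1 * ∑ _i : Fin (n + 1), √(eDen φ x) * ‖ψ x‖ := by
        gcongr
        exact norm_sum_le_of_le _ fun i _ => (norm_cl_gradc_le_sqrt_eDen_mul φ x i _).trans
          (by gcongr; exact norm_le_pi_norm (ψ x) i)
    _ = (n + 1 : ℕ) * √(eDen φ x) * ‖ψ x‖ := by
        rw [one_mul, Finset.sum_const, Finset.card_univ, Fintype.card_fin, nsmul_eq_mul, mul_assoc]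

end IsDiracHarmonicSphere

end EnergyDensities

section Necks

section Lebesgue
variable {α F : Type*} [MeasurableSpace α] {μ : Measure α} [NormedAddCommGroup F] {A B : Set α}
  {w : α → F}

lemma eLpNorm_restrict_union_le {p : ℝ≥0∞} (hp : 1 ≤ p) (hp_top : p ≠ ⊤) :
    eLpNorm w p (μ.restrict (A ∪ B)) ≤
      eLpNorm w p (μ.restrict A) + eLpNorm w p (μ.restrict B) := by
  have hp_zero : p ≠ 0 := (one_pos.trans_le hp).ne'
  have hp_toReal : 1 ≤ p.toReal := by
    simpa using (ENNReal.toReal_le_toReal ENNReal.one_ne_top hp_top).2 hp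
  simp only [eLpNorm_eq_lintegral_rpow_enorm_toReal hp_zero hp_top]
  refine (ENNReal.rpow_le_rpow (lintegral_union_le _ A B) (by positivity)).trans
    (ENNReal.rpow_add_le_add_rpow _ _ (by positivity) ?_)
  exact (div_le_one (one_pos.trans_le hp_toReal)).2 hp_toReal

lemma eLpNorm_restrict_le_of_setIntegral_le {g : α → ℝ} {ε : ℝ} {q : ℕ} (hq : q ≠ 0)
    (hA : MeasurableSet A) (hg : IntegrableOn g A μ) (hwg : ∀ x ∈ A, ‖w x‖ ^ q ≤ g x)
    (hε : ∫ x in A, g x ∂μ ≤ ε) :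
    eLpNorm w q (μ.restrict A) ≤ ENNReal.ofReal (ε ^ (1 / q : ℝ)) := by
  have hg_nonneg : 0 ≤ᵐ[μ.restrict A] g :=
    (ae_restrict_mem hA).mono fun x hx => (by positivity : 0 ≤ ‖w x‖ ^ q).trans (hwg x hx)
  rw [eLpNorm_eq_lintegral_rpow_enorm_toReal (Nat.cast_ne_zero.2 hq) (by simp),
    ← ENNReal.ofReal_rpow_of_nonneg ((integral_nonneg_of_ae hg_nonneg).trans hε) (by positivity),
    ENNReal.toReal_natCast]
  gcongr
  calc ∫⁻ x in A, ‖w x‖ₑ ^ (q : ℝ) ∂μ ≤ ∫⁻ x in A, ENNReal.ofReal (g x) ∂μ := by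
        refine lintegral_mono_ae ((ae_restrict_mem hA).mono fun x hx => ?_)
        rw [ENNReal.rpow_natCast, ← ofReal_norm, ← ENNReal.ofReal_pow (norm_nonneg _)]
        exact ENNReal.ofReal_le_ofReal (hwg x hx)
    _ = ENNReal.ofReal (∫ x in A, g x ∂μ) :=
        (ofReal_integral_eq_lintegral_ofReal hg hg_nonneg).symm
    _ ≤ ENNReal.ofReal ε := ENNReal.ofReal_le_ofReal hε

lemma integral_norm_pow_le_of_eLpNorm_le {q : ℕ} (hq : q ≠ 0) (hw : MemLp w q μ) {b : ℝ}
    (hb : 0 ≤ b) (h : eLpNorm w q μ ≤ ENNReal.ofReal b) : ∫ x, ‖w x‖ ^ q ∂μ ≤ b ^ q := by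
  have hint_nonneg : 0 ≤ ∫ x, ‖w x‖ ^ q ∂μ := integral_nonneg fun x => by positivity
  rw [hw.eLpNorm_eq_integral_rpow_norm (Nat.cast_ne_zero.2 hq) (by simp)] at h
  simp only [ENNReal.toReal_natCast, Real.rpow_natCast] at h
  calc ∫ x, ‖w x‖ ^ q ∂μ = ((∫ x, ‖w x‖ ^ q ∂μ) ^ (q⁻¹ : ℝ)) ^ q :=
        (Real.rpow_inv_natCast_pow hint_nonneg hq).symm
    _ ≤ b ^ q := by
        gcongr
        exact (ENNReal.ofReal_le_ofReal_iff hb).1 h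

end Lebesgue

variable {K : ℕ}

lemma setIntegral_psiSq_sq_le {S : Set (ℝ × ℝ)} (hS : IsCompact S) {ψ : ℝ × ℝ → Fin K → Spinor}
    (hψ : ContinuousOn ψ S) {b : ℝ} (hb : 0 ≤ b)
    (h : eLpNorm ψ 4 (volume.restrict S) ≤ ENNReal.ofReal b) :
    ∫ x in S, psiSq ψ x ^ 2 ≤ (2 * K) ^ 2 * b ^ 4 := by
  have hψ_memLp : MemLp ψ (4 : ℕ) (volume.restrict S) :=
    ⟨hψ.aestronglyMeasurable hS.measurableSet, h.trans_lt ENNReal.ofReal_lt_top⟩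
  calc ∫ x in S, psiSq ψ x ^ 2 ≤ ∫ x in S, (2 * K) ^ 2 * ‖ψ x‖ ^ 4 := by
        refine setIntegral_mono_on (((continuousOn_psiSq hψ).pow 2).integrableOn_compact hS)
          ((continuousOn_const.mul (hψ.norm.pow 4)).integrableOn_compact hS) hS.measurableSet
          fun x _ => ?_
        calc psiSq ψ x ^ 2 ≤ (2 * K * ‖ψ x‖ ^ 2) ^ 2 :=
              pow_le_pow_left₀ (psiSq_nonneg ψ x) (psiSq_le ψ x) 2
          _ = (2 * K) ^ 2 * ‖ψ x‖ ^ 4 := by ring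
    _ = (2 * K) ^ 2 * ∫ x in S, ‖ψ x‖ ^ 4 := integral_const_mul _ _
    _ ≤ (2 * K) ^ 2 * b ^ 4 := by
        gcongr
        exact integral_norm_pow_le_of_eLpNorm_le four_ne_zero hψ_memLp hb h

lemma eLpNorm_four_le_of_setIntegral_le {S : Set (ℝ × ℝ)} (hS : IsCompact S) {V : ℝ × ℝ → ℝ}
    {ψ : ℝ × ℝ → Fin K → Spinor} (hV : ContinuousOn V S) (hV_nonneg : ∀ x ∈ S, 0 ≤ V x)
    (hψ : ContinuousOn ψ S) {ε : ℝ} (hε : ∫ x in S, (V x + psiSq ψ x ^ 2) ≤ ε) :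
    eLpNorm ψ 4 (volume.restrict S) ≤ ENNReal.ofReal (ε ^ (1 / 4 : ℝ)) := by
  have hint : IntegrableOn (fun x => V x + psiSq ψ x ^ 2) S :=
    (hV.add ((continuousOn_psiSq hψ).pow 2)).integrableOn_compact hS
  refine mod_cast eLpNorm_restrict_le_of_setIntegral_le four_ne_zero hS.measurableSet hint
    (fun x hx => ?_) hε
  calc ‖ψ x‖ ^ 4 = (‖ψ x‖ ^ 2) ^ 2 := by ring
    _ ≤ psiSq ψ x ^ 2 := pow_le_pow_left₀ (by positivity) (norm_sq_le_psiSq ψ x) 2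
    _ ≤ V x + psiSq ψ x ^ 2 := le_add_of_nonneg_left (hV_nonneg x hx)

lemma eLpNorm_mul_sqrt_le_of_setIntegral_le {S : Set (ℝ × ℝ)} (hS : IsCompact S)
    {V : ℝ × ℝ → ℝ} (hV : ContinuousOn V S) (hV_nonneg : ∀ x ∈ S, 0 ≤ V x) (N : ℝ) {κ : ℝ}
    (hκ : 0 ≤ κ) (h : ∫ x in S, V x ≤ κ ^ 2 / (N ^ 2 + 1)) :
    eLpNorm (fun x => N * √(V x)) 2 (volume.restrict S) ≤ ENNReal.ofReal κ := by
  have hpoint : ∀ x ∈ S, ‖N * √(V x)‖ ^ 2 ≤ N ^ 2 * V x := fun x hx => by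
    rw [Real.norm_eq_abs, sq_abs, mul_pow, Real.sq_sqrt (hV_nonneg x hx)]
  have hint : ∫ x in S, N ^ 2 * V x ≤ κ ^ 2 := by
    calc ∫ x in S, N ^ 2 * V x = N ^ 2 * ∫ x in S, V x := integral_const_mul _ _
      _ ≤ N ^ 2 * (κ ^ 2 / (N ^ 2 + 1)) := by gcongr
      _ ≤ κ ^ 2 := by
        rw [mul_div_assoc', div_le_iff₀ (by positivity), mul_comm]
        gcongr
        exact le_add_of_nonneg_right zero_le_one
  have hbound := eLpNorm_restrict_le_of_setIntegral_le two_ne_zero hS.measurableSet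
    ((continuousOn_const.mul hV).integrableOn_compact hS) hpoint hint
  rw [one_div, Real.pow_rpow_inv_natCast hκ two_ne_zero] at hbound
  exact_mod_cast hbound

theorem exists_eLpNorm_closedAnnulus_le_of_setIntegral_le (K : ℕ) (N : ℝ) :
    ∃ C κ : ℝ, 0 ≤ C ∧ 0 < κ ∧ ∀ {c : ℝ × ℝ} {r δ ε : ℝ} {V : ℝ × ℝ → ℝ}
      {ψ : ℝ × ℝ → Fin K → Spinor}, 0 < r → r ≤ δ →
      (∀ x ∈ closedAnnulus c (r / 2) (2 * δ), ContDiffAt ℝ 1 ψ x) →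
      ContinuousOn V (closedAnnulus c (r / 2) (2 * δ)) →
      (∀ x ∈ closedAnnulus c (r / 2) (2 * δ), 0 ≤ V x) →
      (∀ x ∈ closedAnnulus c (r / 2) (2 * δ), ∀ m,
        ‖diracOp (fun y => ψ y m) x‖ ≤ N * √(V x) * ‖ψ x‖) →
      ∫ x in closedAnnulus c (r / 2) (2 * δ), V x ≤ κ →
      ∫ x in closedAnnulus c (r / 2) r, (V x + psiSq ψ x ^ 2) ≤ ε →
      ∫ x in closedAnnulus c δ (2 * δ), (V x + psiSq ψ x ^ 2) ≤ ε →
      eLpNorm ψ 4 (volume.restrict (closedAnnulus c r δ)) ≤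
        ENNReal.ofReal (C * ε ^ (1 / 4 : ℝ)) := by
  obtain ⟨C, κ, hκ, hC⟩ := exists_eLpNorm_closedAnnulus_le_of_norm_diracOp_le (Fin K)
  refine ⟨C * 2, κ ^ 2 / (N ^ 2 + 1), by positivity, by positivity,
    fun {c r δ ε V ψ} hr hrδ hψ hV hV_nonneg hdirac hmap hinner houter => ?_⟩
  have hψ_cont : ContinuousOn ψ (closedAnnulus c (r / 2) (2 * δ)) :=
    fun x hx => (hψ x hx).continuousAt.continuousWithinAt
  have hsmall := eLpNorm_mul_sqrt_le_of_setIntegral_le (isCompact_closedAnnulus c) hV hV_nonneg N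
    κ.coe_nonneg hmap
  rw [ENNReal.ofReal_coe_nnreal] at hsmall
  have hend {a b : ℝ} (ha : r / 2 ≤ a) (hb : b ≤ 2 * δ)
      (hab : ∫ x in closedAnnulus c a b, (V x + psiSq ψ x ^ 2) ≤ ε) :
      eLpNorm ψ 4 (volume.restrict (closedAnnulus c a b)) ≤ ENNReal.ofReal (ε ^ (1 / 4 : ℝ)) :=
    have hsub := closedAnnulus_subset_closedAnnulus c ha hb
    eLpNorm_four_le_of_setIntegral_le (isCompact_closedAnnulus c) (hV.mono hsub)
      (fun x hx => hV_nonneg x (hsub hx)) (hψ_cont.mono hsub) hab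
  calc eLpNorm ψ 4 (volume.restrict (closedAnnulus c r δ))
      ≤ C * eLpNorm ψ 4
          (volume.restrict (closedAnnulus c (r / 2) r ∪ closedAnnulus c δ (2 * δ))) :=
        hC hr hrδ hψ (continuousOn_const.mul hV.sqrt) hdirac hsmall
    _ ≤ C * (ENNReal.ofReal (ε ^ (1 / 4 : ℝ)) + ENNReal.ofReal (ε ^ (1 / 4 : ℝ))) := by
        gcongr
        exact (eLpNorm_restrict_union_le (by norm_num) (by simp)).trans
          (add_le_add (hend le_rfl (by linarith) hinner) (hend (by linarith) le_rfl houter))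
    _ = ENNReal.ofReal (C * 2 * ε ^ (1 / 4 : ℝ)) := by
        rw [← two_mul, ← mul_assoc, ENNReal.ofReal_mul (by positivity),
          ENNReal.ofReal_mul (by positivity), ENNReal.ofReal_coe_nnreal, ENNReal.ofReal_ofNat]

end Necks

section NeckLimit

lemma neck_inter_closedAnnulus {c : ℝ × ℝ} {lam R δ a b : ℝ} (ha : lam * R ≤ a) (hb : b ≤ δ) :
    neck c lam R δ ∩ closedAnnulus c a b = closedAnnulus c a b :=
  Set.inter_eq_right.2 (closedAnnulus_subset_closedAnnulus c ha hb)

theorem exists_eLpNorm_neck_le (K : ℕ) (N : ℝ) :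
    ∃ C κ : ℝ, 0 ≤ C ∧ 0 < κ ∧ ∀ {c : ℝ × ℝ} {lam R δ ε : ℝ} {V : ℝ × ℝ → ℝ}
      {ψ : ℝ × ℝ → Fin K → Spinor}, 0 < lam * R → lam * R ≤ δ →
      (∀ x ∈ neck c lam (R / 2) (2 * δ), ContDiffAt ℝ 1 ψ x) →
      ContinuousOn V (neck c lam (R / 2) (2 * δ)) →
      (∀ x ∈ neck c lam (R / 2) (2 * δ), 0 ≤ V x) →
      (∀ x ∈ neck c lam (R / 2) (2 * δ), ∀ m,
        ‖diracOp (fun y => ψ y m) x‖ ≤ N * √(V x) * ‖ψ x‖) →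
      ∫ x in neck c lam (R / 2) (2 * δ), V x ≤ κ →
      (∀ r, lam * (R / 2) ≤ r → 2 * r ≤ 2 * δ →
        ∫ x in neck c lam (R / 2) (2 * δ) ∩ closedAnnulus c r (2 * r),
          (V x + psiSq ψ x ^ 2) ≤ ε) →
      eLpNorm ψ 4 (volume.restrict (neck c lam R δ)) ≤ ENNReal.ofReal (C * ε ^ (1 / 4 : ℝ)) := by
  obtain ⟨C, κ, hC₀, hκ, hC⟩ := exists_eLpNorm_closedAnnulus_le_of_setIntegral_le K N
  refine ⟨C, κ, hC₀, hκ,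
    fun {c lam R δ ε V ψ} hr hrδ hψ hV hV_nonneg hdirac hmap hseg => ?_⟩
  have hdyadic {r : ℝ} (hr_le : lam * R / 2 ≤ r) (hr_ge : 2 * r ≤ 2 * δ) :
      ∫ x in closedAnnulus c r (2 * r), (V x + psiSq ψ x ^ 2) ≤ ε := by
    rw [← mul_div_assoc'] at hr_le
    rw [← neck_inter_closedAnnulus hr_le hr_ge]
    exact hseg r hr_le hr_ge
  have hinner := hdyadic le_rfl (by linarith)
  rw [mul_div_cancel₀ _ two_ne_zero] at hinner
  simp only [neck_eq_closedAnnulus, mul_div_assoc'] at hψ hV hV_nonneg hdirac hmap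
  exact hC hr hrδ hψ hV hV_nonneg hdirac hmap hinner (hdyadic (by linarith) le_rfl)

/-- The property `P R δ k` of the neck with parameters `R`, `δ`, `k` holds in the regime of the
iterated limit `lim_{R → ∞} lim_{δ → 0} lim_{k → ∞}`, in the uniform form in which the smallness
of `δ` does not depend on `R`. -/
def EventuallyOnNecks (P : ℝ → ℝ → ℕ → Prop) : Prop :=
  ∃ R₀ > (0 : ℝ), ∃ δ₀ > (0 : ℝ), ∀ R ≥ R₀, ∀ δ, 0 < δ → δ ≤ δ₀ → ∃ k₀ : ℕ, ∀ k ≥ k₀, P R δ k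

namespace EventuallyOnNecks
variable {P Q : ℝ → ℝ → ℕ → Prop}

lemma mono (hP : EventuallyOnNecks P) (h : ∀ R δ k, P R δ k → Q R δ k) : EventuallyOnNecks Q := by
  obtain ⟨R₀, hR₀, δ₀, hδ₀, hP⟩ := hP
  refine ⟨R₀, hR₀, δ₀, hδ₀, fun R hR δ hδ hδ_le => ?_⟩
  exact (hP R hR δ hδ hδ_le).imp fun k₀ hk₀ k hk => h R δ k (hk₀ k hk)

lemma and (hP : EventuallyOnNecks P) (hQ : EventuallyOnNecks Q) :
    EventuallyOnNecks fun R δ k => P R δ k ∧ Q R δ k := by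
  obtain ⟨R₁, hR₁, δ₁, hδ₁, hP⟩ := hP
  obtain ⟨R₂, -, δ₂, hδ₂, hQ⟩ := hQ
  refine ⟨max R₁ R₂, lt_max_of_lt_left hR₁, min δ₁ δ₂, lt_min hδ₁ hδ₂,
    fun R hR δ hδ hδ_le => ?_⟩
  obtain ⟨hR₁_le, hR₂_le⟩ := max_le_iff.1 hR
  obtain ⟨hδ₁_le, hδ₂_le⟩ := le_min_iff.1 hδ_le
  obtain ⟨k₁, hk₁⟩ := hP R hR₁_le δ hδ hδ₁_le
  obtain ⟨k₂, hk₂⟩ := hQ R hR₂_le δ hδ hδ₂_le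
  exact ⟨max k₁ k₂, fun k hk =>
    ⟨hk₁ k ((le_max_left _ _).trans hk), hk₂ k ((le_max_right _ _).trans hk)⟩⟩

lemma enlarge (hP : EventuallyOnNecks P) :
    EventuallyOnNecks fun R δ k => P (R / 2) (2 * δ) k := by
  obtain ⟨R₀, hR₀, δ₀, hδ₀, hP⟩ := hP
  exact ⟨2 * R₀, by positivity, δ₀ / 2, by positivity, fun R hR δ hδ hδ_le =>
    hP (R / 2) (by linarith) (2 * δ) (by linarith) (by linarith)⟩

end EventuallyOnNecks

section Limit
variable {D : Set (ℝ × ℝ)} {p₀ : ℝ × ℝ} {lam : ℕ → ℝ} {xk : ℕ → ℝ × ℝ}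

lemma eventuallyOnNecks_neck_subset (hD : D ∈ nhds p₀) (hxk : Tendsto xk atTop (nhds p₀)) :
    EventuallyOnNecks fun R δ k => neck (xk k) (lam k) R δ ⊆ D := by
  obtain ⟨ρ, hρ, hρD⟩ := Metric.nhds_basis_closedBall.mem_iff.1 hD
  refine ⟨1, one_pos, ρ / 2, half_pos hρ, fun R _ δ _ hδ => ?_⟩
  obtain ⟨k₀, hk₀⟩ := Metric.tendsto_atTop.1 hxk (ρ / 2) (half_pos hρ)
  refine ⟨k₀, fun k hk => (closedAnnulus_subset_closedBall (xk k)).trans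
    ((Metric.closedBall_subset_closedBall' ?_).trans hρD)⟩
  linarith [hk₀ k hk]

lemma eventuallyOnNecks_mul_le (hlam0 : Tendsto lam atTop (nhds 0)) :
    EventuallyOnNecks fun R δ k => 0 < R ∧ lam k * R ≤ δ := by
  refine ⟨1, one_pos, 1, one_pos, fun R hR δ hδ _ => ?_⟩
  have hlamR : Tendsto (fun k => lam k * R) atTop (nhds 0) := by
    simpa only [zero_mul] using hlam0.mul_const R
  obtain ⟨k₀, hk₀⟩ := eventually_atTop.1 (hlamR.eventually_le_const hδ)
  exact ⟨k₀, fun k hk => ⟨one_pos.trans_le hR, hk₀ k hk⟩⟩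

end Limit

/-- `V k` plays the role of the energy density `|dφ_k|²`. -/
theorem no_energy_loss_on_necks_spinors_general {K : ℕ} {D : Set (ℝ × ℝ)} (hD : IsOpen D)
    {p₀ : ℝ × ℝ} (hp₀ : p₀ ∈ D) {N : ℝ} {V : ℕ → ℝ × ℝ → ℝ}
    {ψk : ℕ → ℝ × ℝ → Fin K → Spinor} (hψ : ∀ k, ContDiffOn ℝ 1 (ψk k) D)
    (hV : ∀ k, ContinuousOn (V k) D) (hV_nonneg : ∀ k, ∀ x ∈ D, 0 ≤ V k x)
    (hdirac : ∀ k, ∀ x ∈ D, ∀ m,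
      ‖diracOp (fun y => ψk k y m) x‖ ≤ N * √(V k x) * ‖ψk k x‖)
    {lam : ℕ → ℝ} (hlam : ∀ k, 0 < lam k) (hlam0 : Tendsto lam atTop (nhds 0))
    {xk : ℕ → ℝ × ℝ} (hxk : Tendsto xk atTop (nhds p₀))
    (hmap : ∀ ε > (0 : ℝ), EventuallyOnNecks fun R δ k =>
      ∫ x in neck (xk k) (lam k) R δ, V k x ≤ ε)
    (hseg : ∀ ε > (0 : ℝ), EventuallyOnNecks fun R δ k => ∀ r, lam k * R ≤ r → 2 * r ≤ δ →
      ∫ x in neck (xk k) (lam k) R δ ∩ closedAnnulus (xk k) r (2 * r),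
        (V k x + psiSq (ψk k) x ^ 2) ≤ ε) :
    ∃ C > (0 : ℝ),
      (∀ ε > (0 : ℝ), EventuallyOnNecks fun R δ k =>
        eLpNorm (ψk k) 4 (volume.restrict (neck (xk k) (lam k) R δ)) ≤
          ENNReal.ofReal (C * √ε + C * ε ^ (1 / 4 : ℝ))) ∧
      (∀ ε > (0 : ℝ), EventuallyOnNecks fun R δ k =>
        ∫ x in neck (xk k) (lam k) R δ, psiSq (ψk k) x ^ 2 ≤ ε) := by
  obtain ⟨C, κ, hC₀, hκ, hC⟩ := exists_eLpNorm_neck_le K N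
  have hsub := eventuallyOnNecks_neck_subset (lam := lam) (hD.mem_nhds hp₀) hxk
  have hbound (ε : ℝ) (hε : 0 < ε) : EventuallyOnNecks fun R δ k =>
      eLpNorm (ψk k) 4 (volume.restrict (neck (xk k) (lam k) R δ)) ≤
        ENNReal.ofReal (C * ε ^ (1 / 4 : ℝ)) := by
    refine ((eventuallyOnNecks_mul_le hlam0).and
      (hsub.and ((hmap κ hκ).and (hseg ε hε))).enlarge).mono ?_
    rintro R δ k ⟨⟨hR, hRδ⟩, hD_sub, hmap_le, hseg_le⟩
    exact hC (mul_pos (hlam k) hR) hRδ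
      (fun x hx => (hψ k).contDiffAt (hD.mem_nhds (hD_sub hx))) ((hV k).mono hD_sub)
      (fun x hx => hV_nonneg k x (hD_sub hx)) (fun x hx => hdirac k x (hD_sub hx)) hmap_le hseg_le
  refine ⟨C + 1, by positivity, fun ε hε => (hbound ε hε).mono fun R δ k h => ?_,
    fun ε hε => (hsub.and (hbound (ε / ((2 * K) ^ 2 * C ^ 4 + 1)) (by positivity))).mono
      fun R δ k h => ?_⟩
  · refine h.trans (ENNReal.ofReal_le_ofReal ?_)
    have hsqrt : 0 ≤ (C + 1) * √ε := by positivity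
    have hrpow : 0 ≤ ε ^ (1 / 4 : ℝ) := by positivity
    linarith
  · set ε' := ε / ((2 * K) ^ 2 * C ^ 4 + 1)
    have hroot : (ε' ^ (1 / 4 : ℝ)) ^ 4 = ε' := by
      rw [one_div]
      exact_mod_cast Real.rpow_inv_natCast_pow (by positivity : 0 ≤ ε') four_ne_zero
    calc ∫ x in neck (xk k) (lam k) R δ, psiSq (ψk k) x ^ 2
        ≤ (2 * K) ^ 2 * (C * ε' ^ (1 / 4 : ℝ)) ^ 4 :=
          setIntegral_psiSq_sq_le (isCompact_closedAnnulus (xk k))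
            ((hψ k).continuousOn.mono h.1) (by positivity) h.2
      _ = (2 * K) ^ 2 * C ^ 4 * ε' := by
        rw [mul_pow C, hroot, mul_assoc]
      _ ≤ ((2 * K) ^ 2 * C ^ 4 + 1) * ε' := by
        gcongr
        exact le_add_of_nonneg_right zero_le_one
      _ = ε := mul_div_cancel₀ _ (by positivity)

end NeckLimit

/-- **No energy loss of the spinors on necks.**
Let `(φ_k,ψ_k)` be smooth Dirac-harmonic maps from (a coordinate domain `D` of) `M` to
`S^n` with energies `E(φ_k,ψ_k) ≤ Λ`, blowing up at the point `p₀` with a single bubble,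
with scales `λ_k → 0`, centers `x_k → p₀` and neck annuli
`A(δ,R,k) = {x : λ_k R ≤ |x-x_k| ≤ δ}`.  The hypotheses record the vanishing of the
map-energy on the necks and the absence of energy concentration on unit segments of the
conformal cylinder (estimate (c16) of the paper, here in dyadic-annulus form).  Then for
`k, R` large and `δ` small, `‖ψ_k‖_{L⁴(A(δ,R,k))} ≤ C√ε + C ε^{1/4}`; consequently
`lim_{R→∞} lim_{δ→0} lim_{k→∞} E(ψ_k; A(δ,R,k)) = 0`, where `E(ψ_k;A) = ∫_A |ψ_k|⁴`. -/
theorem no_energy_loss_on_necks_spinors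
    (n : ℕ) (D : Set (ℝ × ℝ)) (hD : IsOpen D) (p₀ : ℝ × ℝ) (hp₀ : p₀ ∈ D)
    (Λ : ℝ)
    (φk : ℕ → ℝ × ℝ → Fin (n + 1) → ℝ) (ψk : ℕ → ℝ × ℝ → Fin (n + 1) → Spinor)
    (hDH : ∀ k, IsDiracHarmonicSphere n D (φk k) (ψk k))
    (hE : ∀ k, (∫ x in D, (eDen (φk k) x + (psiSq (ψk k) x) ^ 2)) ≤ Λ)
    (lam : ℕ → ℝ) (hlam : ∀ k, 0 < lam k) (hlam0 : Tendsto lam atTop (nhds 0))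
    (xk : ℕ → ℝ × ℝ) (hxk : Tendsto xk atTop (nhds p₀))
    -- no energy loss of the maps on the necks (single bubble at `p₀`)
    (hmap : ∀ ε > (0 : ℝ), ∃ R₀ > (0 : ℝ), ∃ δ₀ > (0 : ℝ), ∀ R ≥ R₀, ∀ δ, 0 < δ → δ ≤ δ₀ →
      ∃ k₀ : ℕ, ∀ k ≥ k₀,
        (∫ x in neck (xk k) (lam k) R δ, eDen (φk k) x) ≤ ε)
    -- no concentration of energy on unit segments of the conformal cylinder (c16),
    -- stated on the corresponding dyadic annuli
    (hseg : ∀ ε > (0 : ℝ), ∃ R₀ > (0 : ℝ), ∃ δ₀ > (0 : ℝ), ∀ R ≥ R₀, ∀ δ, 0 < δ → δ ≤ δ₀ →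
      ∃ k₀ : ℕ, ∀ k ≥ k₀, ∀ r : ℝ, lam k * R ≤ r → 2 * r ≤ δ →
        (∫ x in neck (xk k) (lam k) R δ ∩ {x | r ≤ dist x (xk k) ∧ dist x (xk k) ≤ 2 * r},
          (eDen (φk k) x + (psiSq (ψk k) x) ^ 2)) ≤ ε) :
    ∃ C > (0 : ℝ),
      -- `‖ψ_k‖_{L⁴(A(δ,R,k))} ≤ C√ε + Cε^{1/4}` for `k, R` large and `δ` small
      (∀ ε > (0 : ℝ), ∃ R₀ > (0 : ℝ), ∃ δ₀ > (0 : ℝ), ∀ R ≥ R₀, ∀ δ, 0 < δ → δ ≤ δ₀ →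
        ∃ k₀ : ℕ, ∀ k ≥ k₀,
          eLpNorm (ψk k) 4 (volume.restrict (neck (xk k) (lam k) R δ)) ≤
            ENNReal.ofReal (C * Real.sqrt ε + C * ε ^ (1 / 4 : ℝ))) ∧
      -- hence `lim_{R→∞} lim_{δ→0} lim_{k→∞} E(ψ_k; A(δ,R,k)) = 0`
      (∀ ε > (0 : ℝ), ∃ R₀ > (0 : ℝ), ∃ δ₀ > (0 : ℝ), ∀ R ≥ R₀, ∀ δ, 0 < δ → δ ≤ δ₀ →
        ∃ k₀ : ℕ, ∀ k ≥ k₀,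
          (∫ x in neck (xk k) (lam k) R δ, (psiSq (ψk k) x) ^ 2) ≤ ε) :=
  no_energy_loss_on_necks_spinors_general hD hp₀ (fun k => (hDH k).contDiffOn_spinor)
    (fun k => (hDH k).continuousOn_eDen hD) (fun k x _ => eDen_nonneg (φk k) x)
    (fun k _ hx m => (hDH k).norm_diracOp_le hx m) hlam hlam0 hxk hmap hseg
end
end
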